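/- arXiv:2506.07115 — 2 statements merged into one kernel-verified Lean document; each statement's English description precedes it below -/
import Mathlib

section
/- Let t ≥ 0 and n ≥ 15t + 57 be integers, and set r = C(t,2) + t(n−t) + ⌊(n−t)²/4⌋ + 2. Then every edge-coloring of the complete graph K_n using exactly r colors contains t+2 pairwise vertex-disjoint triangles whose 3(t+2) edges receive pairwise distinct colors. -/
/-- The edge-coloring `c` of `K_n` uses exactly `r` colors: every edge gets a color in
`{0, ..., r-1}` and each of the `r` colors appears on at least one edge. -/
def UsesExactly (n r : ℕ) (c : Sym2 (Fin n) → ℕ) : Prop :=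
  (∀ e ∈ (⊤ : SimpleGraph (Fin n)).edgeSet, c e < r) ∧
  ∀ j < r, ∃ e ∈ (⊤ : SimpleGraph (Fin n)).edgeSet, c e = j

/-- `G` contains `k` pairwise vertex-disjoint triangles whose `3k` edges receive pairwise
distinct colors under `c`: a rainbow copy of `k·K₃`. -/
def RainbowIndepTrianglesIn {V : Type*} (G : SimpleGraph V) (k : ℕ)
    (c : Sym2 V → ℕ) : Prop :=
  ∃ f : Fin k → Fin 3 → V,
    Function.Injective (fun p : Fin k × Fin 3 => f p.1 p.2) ∧
    (∀ i, G.Adj (f i 0) (f i 1) ∧ G.Adj (f i 1) (f i 2) ∧ G.Adj (f i 0) (f i 2)) ∧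
    Function.Injective (fun p : Fin k × Fin 3 => c s(f p.1 p.2, f p.1 (p.2 + 1)))

namespace AR
open Finset Classical

variable {V : Type*}

/-- neighbours of `v` inside `A` -/
noncomputable def nb (G : SimpleGraph V) (A : Finset V) (v : V) : Finset V := A.filter (fun u => G.Adj v u)

/-- degree of `v` into `A` -/
noncomputable def dg (G : SimpleGraph V) (A : Finset V) (v : V) : ℕ := (nb G A v).card

/-- number of ordered adjacent pairs in `A × B` -/
noncomputable def DD (G : SimpleGraph V) (A B : Finset V) : ℕ := ∑ v ∈ A, dg G B v

lemma mem_nb {G : SimpleGraph V} {A : Finset V} {v u : V} : u ∈ nb G A v ↔ u ∈ A ∧ G.Adj v u := by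
  simp [nb]

lemma dg_le (G : SimpleGraph V) (A : Finset V) (v : V) : dg G A v ≤ A.card := card_filter_le _ _

lemma dg_union (G : SimpleGraph V) {A B : Finset V} (h : Disjoint A B) (v : V) :
    dg G (A ∪ B) v = dg G A v + dg G B v := by
  unfold dg nb
  rw [filter_union, card_union_of_disjoint (disjoint_filter_filter h)]

lemma DD_comm (G : SimpleGraph V) (A B : Finset V) : DD G A B = DD G B A := by
  unfold DD dg nb
  simp_rw [card_filter]
  rw [sum_comm]
  simp_rw [G.adj_comm]

lemma DD_union_left (G : SimpleGraph V) {A B : Finset V} (h : Disjoint A B) (C : Finset V) :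
    DD G (A ∪ B) C = DD G A C + DD G B C := sum_union h

lemma DD_union_right (G : SimpleGraph V) {A B : Finset V} (h : Disjoint A B) (C : Finset V) :
    DD G C (A ∪ B) = DD G C A + DD G C B := by
  rw [DD_comm, DD_union_left G h, DD_comm G A, DD_comm G B]

lemma DD_split (G : SimpleGraph V) {W T : Finset V} (h : T ⊆ W) :
    DD G W W = DD G (W \ T) (W \ T) + 2 * DD G T (W \ T) + DD G T T := by
  have hd : Disjoint (W \ T) T := sdiff_disjoint
  have e : W = (W \ T) ∪ T := by rw [sdiff_union_of_subset h]
  conv_lhs => rw [e]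
  rw [DD_union_left G hd, DD_union_right G hd, DD_union_right G hd, DD_comm G (W \ T) T]
  ring

/-- no triangle inside `R` -/
def TF (G : SimpleGraph V) (R : Finset V) : Prop :=
  ∀ a ∈ R, ∀ b ∈ R, ∀ c ∈ R, G.Adj a b → G.Adj b c → G.Adj a c → False

lemma TF.mono {G : SimpleGraph V} {R R' : Finset V} (h : TF G R) (hs : R' ⊆ R) : TF G R' :=
  fun a ha b hb c hc => h a (hs ha) b (hs hb) c (hs hc)

lemma DD_le (G : SimpleGraph V) (A B : Finset V) : DD G A B ≤ A.card * B.card := by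
  unfold DD
  calc _ ≤ ∑ v ∈ A, B.card := sum_le_sum (fun v _ => dg_le G B v)
    _ = _ := by simp

lemma dg_eq_zero {G : SimpleGraph V} {A : Finset V} {v : V} (h : ∀ u ∈ A, ¬ G.Adj v u) : dg G A v = 0 := by
  unfold dg nb
  rw [card_eq_zero, filter_eq_empty_iff]
  exact fun u hu => h u hu

lemma DD_eq_zero {G : SimpleGraph V} {A B : Finset V} (h : ∀ v ∈ A, ∀ u ∈ B, ¬ G.Adj v u) : DD G A B = 0 := by
  unfold DD
  exact sum_eq_zero (fun v hv => dg_eq_zero (h v hv))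

lemma card_sdiff_pair {R : Finset V} {p q : V} (hp : p ∈ R) (hq : q ∈ R) (hpq : p ≠ q) :
    (R \ {p, q}).card + 2 = R.card := by
  have : ({p, q} : Finset V) ⊆ R := by
    intro x hx; simp at hx; rcases hx with rfl | rfl <;> assumption
  rw [← card_sdiff_add_card_eq_card this, card_pair hpq]

lemma peel {G : SimpleGraph V} {R : Finset V} (h : TF G R) {p q : V} (hp : p ∈ R) (hq : q ∈ R)
    (hpq : G.Adj p q) : DD G R R + 2 ≤ DD G (R \ {p, q}) (R \ {p, q}) + 2 * R.card := by
  have hsub : ({p, q} : Finset V) ⊆ R := by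
    intro x hx; simp at hx; rcases hx with rfl | rfl <;> assumption
  have hne := hpq.ne
  have hc := card_sdiff_pair hp hq hne
  rw [DD_split G hsub]
  have h1 : DD G {p, q} (R \ {p, q}) ≤ (R \ {p, q}).card := by
    unfold DD
    rw [sum_pair hne]
    unfold dg
    rw [← card_union_of_disjoint]
    · apply card_le_card
      intro x hx
      rw [mem_union, mem_nb, mem_nb] at hx
      tauto
    · rw [disjoint_left]
      intro x hx hx'
      rw [mem_nb] at hx hx'
      exact h p hp q hq x (mem_sdiff.1 hx.1).1 hpq hx'.2 hx.2
  have h2 : DD G {p, q} {p, q} ≤ 2 := by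
    unfold DD
    rw [sum_pair hne]
    have a1 : nb G {p, q} p ⊆ {q} := by
      intro x hx
      rw [mem_nb] at hx
      have := hx.2.ne
      have := hx.1
      simp at this ⊢
      grind
    have a2 : nb G {p, q} q ⊆ {p} := by
      intro x hx
      rw [mem_nb] at hx
      have := hx.2.ne
      have := hx.1
      simp at this ⊢
      grind
    have := card_le_card a1
    have := card_le_card a2
    simp at *
    unfold dg
    omega
  omega

lemma mantel {G : SimpleGraph V} : ∀ (m : ℕ) (R : Finset V), R.card = m → TF G R →
    2 * DD G R R ≤ m ^ 2 := by
  intro m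
  induction m using Nat.strong_induction_on with
  | _ m ih =>
    intro R hR h
    by_cases he : ∃ p ∈ R, ∃ q ∈ R, G.Adj p q
    · obtain ⟨p, hp, q, hq, hpq⟩ := he
      have h1 := peel h hp hq hpq
      have hc := card_sdiff_pair hp hq hpq.ne
      have h2 := ih (R \ {p, q}).card (by omega) _ rfl (h.mono sdiff_subset)
      set k := (R \ {p, q}).card
      have : m = k + 2 := by omega
      subst this
      nlinarith
    · push Not at he
      rw [DD_eq_zero he]; simp

/-- `S` contains a matching with `k` edges -/
def HasM (G : SimpleGraph V) : ℕ → Finset V → Prop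
  | 0, _ => True
  | k + 1, S => ∃ p ∈ S, ∃ q ∈ S, G.Adj p q ∧ HasM G k (S \ {p, q})

lemma HasM.mono {G : SimpleGraph V} : ∀ {k : ℕ} {S S' : Finset V}, HasM G k S → S ⊆ S' → HasM G k S'
  | 0, _, _, _, _ => trivial
  | k + 1, S, S', ⟨p, hp, q, hq, h, h'⟩, hs =>
    ⟨p, hs hp, q, hs hq, h, HasM.mono h' (sdiff_subset_sdiff hs le_rfl)⟩

lemma HasM.erase {G : SimpleGraph V} (v : V) : ∀ {k : ℕ} {S : Finset V}, HasM G (k + 1) S → HasM G k (S.erase v) := by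
  intro k
  induction k with
  | zero => intro S _; trivial
  | succ k ih =>
    rintro S ⟨p, hp, q, hq, h, h'⟩
    by_cases hv : v = p ∨ v = q
    · apply h'.mono
      intro x hx
      simp at hx ⊢
      rcases hv with rfl | rfl <;> tauto
    · push Not at hv
      refine ⟨p, mem_erase.2 ⟨hv.1.symm, hp⟩, q, mem_erase.2 ⟨hv.2.symm, hq⟩, h, ?_⟩
      apply (ih h').mono
      intro x hx
      simp at hx ⊢
      tauto

lemma HasM.sdiff {G : SimpleGraph V} (F : Finset V) : ∀ {k : ℕ} {S : Finset V}, HasM G (k + F.card) S → HasM G k (S \ F) := by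
  induction F using Finset.induction_on with
  | empty => intro k S h; simpa using h
  | insert a F ha ih =>
    intro k S h
    rw [card_insert_of_notMem ha, ← add_assoc] at h
    have := ih (HasM.erase a h)
    apply this.mono
    intro x hx
    simp at hx ⊢
    tauto

lemma HasM.le {G : SimpleGraph V} {j k : ℕ} {S : Finset V} (h : HasM G k S) (hj : j ≤ k) : HasM G j S := by
  obtain ⟨d, rfl⟩ := Nat.exists_eq_add_of_le hj
  induction d with
  | zero => exact h
  | succ d ih =>
    exact ih ((HasM.erase (k := j + d) (S := S) (Classical.choice (by
      obtain ⟨p, _⟩ := h; exact ⟨p⟩)) h).mono (erase_subset _ _)) (by omega)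

lemma HasM.exists_edge {G : SimpleGraph V} {k : ℕ} {S F : Finset V} (h : HasM G k S) (hF : F.card < k) :
    ∃ p ∈ S, ∃ q ∈ S, G.Adj p q ∧ p ∉ F ∧ q ∉ F := by
  have : HasM G (1 + F.card) S := h.le (by omega)
  obtain ⟨p, hp, q, hq, h, _⟩ := this.sdiff F
  simp at hp hq
  exact ⟨p, hp.1, q, hq.1, h, hp.2, hq.2⟩

lemma stab {G : SimpleGraph V} : ∀ (m : ℕ) (R S : Finset V) (ν : ℕ) (b : ℤ), R.card = m → TF G R →
    S ⊆ R → ¬ HasM G (ν + 1) S → m ≤ b → b ≤ 2 * S.card - 2 * ν →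
    2 * (DD G R R : ℤ) ≤ b * (2 * m - b) := by
  intro m
  induction m using Nat.strong_induction_on with
  | _ m ih =>
    intro R S ν b hR h hSR hM hmb hb
    by_cases he : ∃ p ∈ S, ∃ q ∈ S, G.Adj p q
    · obtain ⟨p, hp, q, hq, hpq⟩ := he
      have h1 := peel h (hSR hp) (hSR hq) hpq
      have hc := card_sdiff_pair (hSR hp) (hSR hq) hpq.ne
      have hc' := card_sdiff_pair hp hq hpq.ne
      obtain _ | ν := ν
      · exact absurd ⟨p, hp, q, hq, hpq, trivial⟩ hM
      have hM' : ¬ HasM G (ν + 1) (S \ {p, q}) := fun h' => hM ⟨p, hp, q, hq, hpq, h'⟩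
      have h2 := ih (R \ {p, q}).card (by omega) _ (S \ {p, q}) ν (b - 2) rfl (h.mono sdiff_subset)
        (sdiff_subset_sdiff hSR le_rfl) hM' (by push_cast at *; omega) (by push_cast at *; omega)
      set k := (R \ {p, q}).card
      have : m = k + 2 := by omega
      subst this
      zify at h1
      rw [hR] at h1
      push_cast at *
      nlinarith
    · by_cases he2 : ∃ p ∈ R \ S, ∃ q ∈ R \ S, G.Adj p q
      · obtain ⟨p, hp, q, hq, hpq⟩ := he2
        rw [mem_sdiff] at hp hq
        have h1 := peel h hp.1 hq.1 hpq
        have hc := card_sdiff_pair hp.1 hq.1 hpq.ne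
        have h2 := ih (R \ {p, q}).card (by omega) _ S ν b rfl (h.mono sdiff_subset)
          (by
            intro x hx
            simp only [mem_sdiff, mem_insert, mem_singleton]
            refine ⟨hSR hx, ?_⟩
            rintro (rfl | rfl) <;> tauto) hM (by push_cast at *; omega) hb
        set k := (R \ {p, q}).card
        have : m = k + 2 := by omega
        subst this
        zify at h1
        rw [hR] at h1
        push_cast at *
        nlinarith
      · push Not at he he2
        rw [DD_split G hSR, DD_eq_zero he, DD_eq_zero he2]
        have h1 := DD_le G S (R \ S)
        have hc : (R \ S).card + S.card = m := by rw [card_sdiff_add_card_eq_card hSR, hR]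
        zify at h1 hc
        have : ((R \ S).card : ℤ) = m - S.card := by linarith
        rw [this] at h1
        push_cast
        nlinarith [mul_nonneg (show (0:ℤ) ≤ 2 * S.card - b by omega) (show (0:ℤ) ≤ 2 * S.card + b - 2 * m by omega)]

/-- `P` is a family of pairwise disjoint triangles of `G` inside `A` -/
def IsPk (G : SimpleGraph V) (P : Finset (Finset V)) (A : Finset V) : Prop :=
  (∀ D ∈ P, D ⊆ A ∧ G.IsNClique 3 D) ∧ ∀ D ∈ P, ∀ E ∈ P, D ≠ E → Disjoint D E

/-- `A` contains `k` pairwise disjoint triangles of `G` -/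
def Pk (G : SimpleGraph V) (k : ℕ) (A : Finset V) : Prop := ∃ P : Finset (Finset V), P.card = k ∧ IsPk G P A

lemma Pk.mono {G : SimpleGraph V} {k : ℕ} {A B : Finset V} (h : Pk G k A) (hs : A ⊆ B) : Pk G k B := by
  obtain ⟨P, h1, h2, h3⟩ := h
  exact ⟨P, h1, fun D hD => ⟨(h2 D hD).1.trans hs, (h2 D hD).2⟩, h3⟩

lemma Pk.zero (G : SimpleGraph V) (A : Finset V) : Pk G 0 A := ⟨∅, rfl, by simp, by simp⟩

lemma Pk.insert {G : SimpleGraph V} {k : ℕ} {A B : Finset V} (h : Pk G k A) {a b c : V}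
    (hab : G.Adj a b) (hac : G.Adj a c) (hbc : G.Adj b c) (ha : a ∉ A) (hb : b ∉ A) (hc : c ∉ A)
    (hB : A ∪ {a, b, c} ⊆ B) : Pk G (k + 1) B := by
  obtain ⟨P, h1, h2, h3⟩ := h
  have hcl : G.IsNClique 3 {a, b, c} := SimpleGraph.is3Clique_iff.2 ⟨a, b, c, hab, hac, hbc, rfl⟩
  have hdis : ∀ D ∈ P, Disjoint D {a, b, c} := by
    intro D hD
    have := (h2 D hD).1
    rw [disjoint_right]
    intro x hx hx'
    simp at hx
    rcases hx with rfl | rfl | rfl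
    · exact ha (this hx')
    · exact hb (this hx')
    · exact hc (this hx')
  have hnot : ({a, b, c} : Finset V) ∉ P := by
    intro h
    have := hdis _ h
    rw [disjoint_self] at this
    simp at this
  refine ⟨Insert.insert {a, b, c} P, by rw [card_insert_of_notMem hnot, h1], ?_, ?_⟩
  · intro D hD
    rw [mem_insert] at hD
    rcases hD with rfl | hD
    · exact ⟨subset_union_right.trans hB, hcl⟩
    · exact ⟨((h2 D hD).1.trans subset_union_left).trans hB, (h2 D hD).2⟩
  · intro D hD E hE hne
    rw [mem_insert] at hD hE
    rcases hD with rfl | hD <;> rcases hE with rfl | hE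
    · exact absurd rfl hne
    · exact (hdis E hE).symm
    · exact hdis D hD
    · exact h3 D hD E hE hne

/-- `G` without the edges of colour `φ` -/
def del (G : SimpleGraph V) (c : Sym2 V → ℕ) (φ : ℕ) : SimpleGraph V where
  Adj a b := G.Adj a b ∧ c s(a, b) ≠ φ
  symm := ⟨fun a b h => ⟨h.1.symm, by rw [Sym2.eq_swap]; exact h.2⟩⟩
  loopless := ⟨fun a h => G.loopless.irrefl a h.1⟩

/-- all edges of `G` have different colours -/
def RB (G : SimpleGraph V) (c : Sym2 V → ℕ) : Prop :=
  ∀ a b a' b', G.Adj a b → G.Adj a' b' → c s(a, b) = c s(a', b') → s(a, b) = s(a', b')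

/-- the inductive conclusion -/
def Conc (G : SimpleGraph V) (c : Sym2 V → ℕ) (t : ℕ) (W : Finset V) : Prop :=
  ∃ p ∈ W, ∃ q ∈ W, ∃ w ∈ W, p ≠ q ∧ (del G c (c s(p, q))).Adj p w ∧ (del G c (c s(p, q))).Adj q w ∧
    Pk (del G c (c s(p, q))) (t + 1) (W \ {p, q, w})

lemma not_TF {G : SimpleGraph V} {R : Finset V} (h : ¬ TF G R) : ∃ a ∈ R, ∃ b ∈ R, ∃ c ∈ R,
    G.Adj a b ∧ G.Adj b c ∧ G.Adj a c := by
  unfold TF at h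
  push Not at h
  obtain ⟨a, ha, b, hb, c, hc, h1, h2, h3, _⟩ := h
  exact ⟨a, ha, b, hb, c, hc, h1, h2, h3⟩

lemma DD_card (G : SimpleGraph V) (A B : Finset V) :
    DD G A B = ((A ×ˢ B).filter (fun e => G.Adj e.1 e.2)).card := by
  rw [card_filter, sum_product]
  unfold DD dg nb
  simp_rw [card_filter]

lemma DD_del {G : SimpleGraph V} {c : Sym2 V → ℕ} (h : RB G c) (φ : ℕ) (W : Finset V) :
    DD G W W ≤ DD (del G c φ) W W + 2 := by
  by_cases he : ∃ a b, G.Adj a b ∧ c s(a, b) = φ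
  · obtain ⟨a, b, hab, hφ⟩ := he
    rw [DD_card, DD_card]
    have : (W ×ˢ W).filter (fun e => G.Adj e.1 e.2) ⊆
        (W ×ˢ W).filter (fun e => (del G c φ).Adj e.1 e.2) ∪ {(a, b), (b, a)} := by
      rintro ⟨u, v⟩ hx
      rw [mem_filter] at hx
      rw [mem_union, mem_filter]
      by_cases hc : c s(u, v) = φ
      · right
        have := h u v a b hx.2 hab (hc.trans hφ.symm)
        simp at this ⊢
        exact this
      · left
        exact ⟨hx.1, hx.2, hc⟩
    calc _ ≤ _ := card_le_card this
      _ ≤ _ := card_union_le _ _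
      _ ≤ _ := by gcongr; exact card_le_two
  · push Not at he
    have : del G c φ = G := by
      ext a b
      exact ⟨fun h => h.1, fun h => ⟨h, he a b h⟩⟩
    rw [this]; omega

lemma exists_C4 {G : SimpleGraph V} {A : Finset V}
    (h : A.card * DD G A A + A.card ^ 2 * (A.card - 1) < DD G A A ^ 2) :
    ∃ p ∈ A, ∃ q ∈ A, p ≠ q ∧ ∃ w ∈ A, ∃ w' ∈ A, w ≠ w' ∧ G.Adj p w ∧ G.Adj q w ∧ G.Adj p w' ∧ G.Adj q w' := by
  by_contra hcon
  push Not at hcon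
  have h1 : DD G A A ^ 2 ≤ A.card * ∑ v ∈ A, dg G A v ^ 2 := sq_sum_le_card_mul_sum_sq
  have h2 : ∑ v ∈ A, dg G A v ^ 2 = ∑ p ∈ A, ∑ q ∈ A, (A.filter (fun w => G.Adj w p ∧ G.Adj w q)).card := by
    have : ∀ w, dg G A w ^ 2 = ∑ p ∈ A, ∑ q ∈ A, if G.Adj w p ∧ G.Adj w q then 1 else 0 := by
      intro w
      unfold dg nb
      rw [sq, card_filter, sum_mul_sum]
      refine sum_congr rfl fun p _ => sum_congr rfl fun q _ => ?_
      split_ifs <;> simp_all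
    simp_rw [this, card_filter]
    rw [sum_comm]
    refine sum_congr rfl fun p _ => ?_
    rw [sum_comm]
  have h3 : ∀ p ∈ A, ∑ q ∈ A, (A.filter (fun w => G.Adj w p ∧ G.Adj w q)).card ≤ dg G A p + (A.card - 1) := by
    intro p hp
    rw [← add_sum_erase A _ hp]
    apply add_le_add
    · unfold dg nb
      apply card_le_card
      intro x hx
      rw [mem_filter] at hx ⊢
      exact ⟨hx.1, hx.2.1.symm⟩
    · calc _ ≤ ∑ q ∈ A.erase p, 1 := by
            apply sum_le_sum
            intro q hq
            rw [mem_erase] at hq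
            rw [card_le_one]
            intro w hw w' hw'
            rw [mem_filter] at hw hw'
            by_contra hne
            exact hcon p hp q hq.2 hq.1.symm w hw.1 w' hw'.1 hne hw.2.1.symm hw.2.2.symm hw'.2.1.symm hw'.2.2.symm
        _ = _ := by rw [sum_const, card_erase_of_mem hp]; simp
  have h4 : ∑ v ∈ A, dg G A v ^ 2 ≤ DD G A A + A.card * (A.card - 1) := by
    rw [h2]
    calc _ ≤ _ := sum_le_sum h3
      _ = _ := by rw [sum_add_distrib]; simp [DD]
  have := Nat.mul_le_mul_left A.card h4
  nlinarith

lemma arith1 {N D k : ℕ} (hN : 45 ≤ N) (hk : k ≤ 12)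
    (e6 : (N + k) ^ 2 + 5 ≤ 2 * D + 4 * (k * N) + 2 * (k * k)) :
    N * D + N ^ 2 * (N - 1) < D ^ 2 := by
  have f1 : k * N ≤ 12 * N := Nat.mul_le_mul_right _ hk
  have f2 : k * k ≤ 12 * 12 := Nat.mul_le_mul hk hk
  have e7 : N * N ≤ 2 * D + 28 * N := by
    have : (N + k) ^ 2 = N * N + 2 * (k * N) + k * k := by ring
    rw [this] at e6
    generalize N * N = a at *
    generalize k * N = b at *
    generalize k * k = d at *
    omega
  obtain ⟨s, hs⟩ := Nat.exists_eq_add_of_le hN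
  have hN1 : N - 1 = 44 + s := by omega
  rw [hN1]
  have e8 : N * (17 + s) ≤ 2 * D := by rw [hs] at e7 ⊢; linarith
  have e9 : N * (15 + s) ≤ 2 * (D - N : ℤ) := by
    zify at e8; linarith
  zify at e8 ⊢
  have e10 : (N * (17 + s) : ℤ) * (N * (15 + s)) ≤ (2 * D) * (2 * (D - N)) := by
    apply mul_le_mul e8 e9 <;> positivity
  have e11 : (0:ℤ) < N ^ 2 := by positivity
  have e12 : (4 * (44 + s) : ℤ) < (17 + s) * (15 + s) := by nlinarith
  have e13 := mul_lt_mul_of_pos_left e12 e11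
  linarith

lemma base {G : SimpleGraph V} {c : Sym2 V → ℕ} (h : RB G c) (W : Finset V) (hW : 57 ≤ W.card)
    (hD : 2 * (W.card ^ 2 / 4 + 2) ≤ DD G W W) : Conc G c 0 W := by
  have htri : ∀ φ, ∃ x ∈ W, ∃ y ∈ W, ∃ z ∈ W, (del G c φ).Adj x y ∧ (del G c φ).Adj y z ∧ (del G c φ).Adj x z := by
    intro φ
    apply not_TF
    intro hT
    have h1 := mantel _ W rfl hT
    have h2 := DD_del h φ W
    omega
  have htri0 : ∃ x ∈ W, ∃ y ∈ W, ∃ z ∈ W, G.Adj x y ∧ G.Adj y z ∧ G.Adj x z := by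
    apply not_TF
    intro hT
    have h1 := mantel _ W rfl hT
    omega
  choose x hx y hy z hz hxy hyz hxz using htri
  obtain ⟨a, ha, b, hb, d, hd, hab, hbd, had⟩ := htri0
  obtain ⟨Z, hZW, hZc, hZ⟩ : ∃ Z ⊆ W, Z.card ≤ 12 ∧ ∀ φ, ∃ x ∈ Z, ∃ y ∈ Z, ∃ z ∈ Z,
      (del G c φ).Adj x y ∧ (del G c φ).Adj y z ∧ (del G c φ).Adj x z := by
    let T : ℕ → Finset V := fun φ => {x φ, y φ, z φ}
    have hTW : ∀ φ, T φ ⊆ W := by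
      intro φ u hu
      simp [T] at hu
      rcases hu with rfl | rfl | rfl
      · exact hx φ
      · exact hy φ
      · exact hz φ
    have hTc : ∀ φ, (T φ).card ≤ 3 := fun φ => card_le_three
    have hT : ∀ φ, ∃ x ∈ T φ, ∃ y ∈ T φ, ∃ z ∈ T φ,
      (del G c φ).Adj x y ∧ (del G c φ).Adj y z ∧ (del G c φ).Adj x z := fun φ =>
      ⟨x φ, by simp [T], y φ, by simp [T], z φ, by simp [T], hxy φ, hyz φ, hxz φ⟩
    refine ⟨{a, b, d} ∪ (T (c s(a, b)) ∪ (T (c s(b, d)) ∪ T (c s(a, d)))), ?_, ?_, ?_⟩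
    · refine union_subset ?_ (union_subset (hTW _) (union_subset (hTW _) (hTW _)))
      intro u hu
      simp at hu
      rcases hu with rfl | rfl | rfl <;> assumption
    · have h1 := card_union_le {a, b, d} (T (c s(a, b)) ∪ (T (c s(b, d)) ∪ T (c s(a, d))))
      have h2 := card_union_le (T (c s(a, b))) (T (c s(b, d)) ∪ T (c s(a, d)))
      have h3 := card_union_le (T (c s(b, d))) (T (c s(a, d)))
      have h4 : ({a, b, d} : Finset V).card ≤ 3 := card_le_three
      have := hTc (c s(a, b))
      have := hTc (c s(b, d))
      have := hTc (c s(a, d))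
      omega
    · intro φ
      by_cases h1 : c s(a, b) = φ
      · obtain ⟨x, hx, y, hy, z, hz, h⟩ := hT φ
        subst h1
        exact ⟨x, by simp [hx], y, by simp [hy], z, by simp [hz], h⟩
      by_cases h2 : c s(b, d) = φ
      · obtain ⟨x, hx, y, hy, z, hz, h⟩ := hT φ
        subst h2
        exact ⟨x, by simp [hx], y, by simp [hy], z, by simp [hz], h⟩
      by_cases h3 : c s(a, d) = φ
      · obtain ⟨x, hx, y, hy, z, hz, h⟩ := hT φ
        subst h3
        exact ⟨x, by simp [hx], y, by simp [hy], z, by simp [hz], h⟩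
      exact ⟨a, by simp, b, by simp, d, by simp, ⟨hab, h1⟩, ⟨hbd, h2⟩, ⟨had, h3⟩⟩
  clear x hx y hy z hz hxy hyz hxz a ha b hb d hd hab hbd had
  obtain ⟨p, hp, q, hq, hpq, w, hw, w', hw', hww, h1, h2, h3, h4⟩ : ∃ p ∈ W \ Z, ∃ q ∈ W \ Z, p ≠ q ∧
      ∃ w ∈ W \ Z, ∃ w' ∈ W \ Z, w ≠ w' ∧ G.Adj p w ∧ G.Adj q w ∧ G.Adj p w' ∧ G.Adj q w' := by
    apply exists_C4
    have e1 := DD_split G hZW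
    have e2 := DD_le G Z (W \ Z)
    have e3 := DD_le G Z Z
    have e4 := card_sdiff_add_card_eq_card hZW
    set N := (W \ Z).card
    set D := DD G (W \ Z) (W \ Z)
    set k := Z.card
    have e5 : W.card ^ 2 < 4 * (W.card ^ 2 / 4) + 4 := by omega
    have hN : 45 ≤ N := by omega
    have e6 : W.card ^ 2 + 5 ≤ 2 * D + 4 * (k * N) + 2 * (k * k) := by omega
    rw [← e4] at e6
    exact arith1 hN (by omega) e6
  set φ := c s(p, q) with hφ
  obtain ⟨x, hx, y, hy, z, hz, hxy, hyz, hxz⟩ := hZ φ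
  have hex : ∃ w ∈ W \ Z, (del G c φ).Adj p w ∧ (del G c φ).Adj q w := by
    by_cases c1 : c s(p, w) = φ
    · refine ⟨w', hw', ⟨h3, ?_⟩, ⟨h4, ?_⟩⟩
      · intro c2
        have := h _ _ _ _ h1 h3 (c1.trans c2.symm)
        have := h1.ne; have := h2.ne; have := h3.ne; have := h4.ne
        simp at *; grind
      · intro c2
        have := h _ _ _ _ h1 h4 (c1.trans c2.symm)
        have := h1.ne; have := h2.ne; have := h3.ne; have := h4.ne
        simp at *; grind
    by_cases c1' : c s(q, w) = φ
    · refine ⟨w', hw', ⟨h3, ?_⟩, ⟨h4, ?_⟩⟩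
      · intro c2
        have := h _ _ _ _ h2 h3 (c1'.trans c2.symm)
        have := h1.ne; have := h2.ne; have := h3.ne; have := h4.ne
        simp at *; grind
      · intro c2
        have := h _ _ _ _ h2 h4 (c1'.trans c2.symm)
        have := h1.ne; have := h2.ne; have := h3.ne; have := h4.ne
        simp at *; grind
    exact ⟨w, hw, ⟨h1, c1⟩, ⟨h2, c1'⟩⟩
  obtain ⟨w, hw, k1, k2⟩ := hex
  rw [mem_sdiff] at hp hq hw
  refine ⟨p, hp.1, q, hq.1, w, hw.1, hpq, k1, k2, ?_⟩
  refine (Pk.zero _ ∅).insert hxy hxz hyz (by simp) (by simp) (by simp) ?_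
  intro u hu
  have huZ : u ∈ Z := by
    simp at hu
    rcases hu with rfl | rfl | rfl <;> assumption
  rw [mem_sdiff]
  refine ⟨hZW huZ, ?_⟩
  simp only [mem_insert, mem_singleton]
  rintro (rfl | rfl | rfl) <;> tauto

lemma extend {G : SimpleGraph V} {c : Sym2 V → ℕ} (h : RB G c) {t : ℕ} {W S : Finset V} {x : V}
    (hx : x ∈ W) (hSW : S ⊆ W) (hS : ∀ u ∈ S, G.Adj x u) (hM : HasM G (3 * t + 8) S)
    (hC : Conc G c t (W.erase x)) : Conc G c (t + 1) W := by
  obtain ⟨p, hp, q, hq, w, hw, hpq, hpw, hqw, P, hPc, hP1, hP2⟩ := hC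
  set φ := c s(p, q) with hφ
  obtain ⟨z, hzx, hz⟩ : ∃ z, x ≠ z ∧ ∀ u v, u ≠ z → v ≠ z → G.Adj u v → (del G c φ).Adj u v := by
    by_cases he : ∃ a b, G.Adj a b ∧ c s(a, b) = φ
    · obtain ⟨a, b, hab, hc⟩ := he
      have hne := hab.ne
      by_cases hax : a = x
      · refine ⟨b, by grind, fun u v h1 h2 h5 => ⟨h5, fun h6 => ?_⟩⟩
        have := h _ _ _ _ hab h5 (hc.trans h6.symm)
        simp at this
        grind
      · refine ⟨a, by grind, fun u v h1 h2 h5 => ⟨h5, fun h6 => ?_⟩⟩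
        have := h _ _ _ _ hab h5 (hc.trans h6.symm)
        simp at this
        grind
    · push Not at he
      exact ⟨p, (mem_erase.1 hp).1.symm, fun u v _ _ h5 => ⟨h5, he u v h5⟩⟩
  set T := P.biUnion id with hT
  have hTc : T.card ≤ (t + 1) * 3 := by
    rw [← hPc]
    exact card_biUnion_le_card_mul _ _ _ (fun D hD => (hP1 D hD).2.card_eq.le)
  have hFc : ((insert z ({p, q, w} ∪ T) : Finset V)).card < 3 * t + 8 := by
    have h1 := card_insert_le z ({p, q, w} ∪ T)
    have h2 := card_union_le {p, q, w} T
    have h3 : ({p, q, w} : Finset V).card ≤ 3 := card_le_three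
    omega
  obtain ⟨a, ha, b, hb, hab, haF, hbF⟩ := hM.exists_edge hFc
  have hTsub : T ⊆ W.erase x \ {p, q, w} := by
    intro u hu
    rw [hT, mem_biUnion] at hu
    obtain ⟨D, hD, hu⟩ := hu
    exact (hP1 D hD).1 hu
  have hxa := hS a ha
  have hxb := hS b hb
  have hpk : Pk (del G c φ) (t + 1) T := by
    refine ⟨P, hPc, fun D hD => ⟨?_, (hP1 D hD).2⟩, hP2⟩
    exact subset_biUnion_of_mem id hD
  simp only [mem_insert, mem_union, mem_singleton, not_or] at haF hbF
  have hxT : x ∉ T := fun hh => by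
    have := hTsub hh
    simp at this
  rw [mem_erase] at hp hq hw
  refine ⟨p, hp.2, q, hq.2, w, hw.2, hpq, hpw, hqw, ?_⟩
  refine hpk.insert (hz x a hzx haF.1 hxa) (hz x b hzx hbF.1 hxb) (hz a b haF.1 hbF.1 hab) hxT haF.2.2 hbF.2.2 ?_
  intro u hu
  rw [mem_union] at hu
  rcases hu with hu | hu
  · have := hTsub hu
    simp at this ⊢
    tauto
  · simp only [mem_insert, mem_singleton] at hu
    simp only [mem_sdiff, mem_insert, mem_singleton, not_or]
    rcases hu with rfl | rfl | rfl
    · exact ⟨hx, hp.1.symm, hq.1.symm, hw.1.symm⟩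
    · exact ⟨hSW ha, haF.2.1⟩
    · exact ⟨hSW hb, hbF.2.1⟩

lemma count1 {G : SimpleGraph V} {W T : Finset V} (hTW : T ⊆ W) (hR : TF G (W \ T)) (ν : V → ℕ)
    (hν : ∀ v ∈ T, ¬ HasM G (ν v + 1) (nb G (W \ T) v)) :
    2 * DD G W W ≤ W.card ^ 2 + 2 * ∑ v ∈ T, (2 * ν v + dg G T v) := by
  set R := W \ T with hRdef
  obtain ⟨b, hb1, hb2⟩ : ∃ b : ℤ, 2 * (DD G R R : ℤ) ≤ b * (2 * R.card - b) ∧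
      ∀ v ∈ T, 2 * (dg G R v : ℤ) ≤ b + 2 * ν v := by
    by_cases hall : ∀ v ∈ T, 2 * (dg G R v : ℤ) ≤ R.card + 2 * ν v
    · refine ⟨R.card, ?_, hall⟩
      have := mantel _ R rfl hR
      zify at this
      linarith
    · push Not at hall
      obtain ⟨v₀, hv₀, hlt⟩ := hall
      obtain ⟨v, hv, hmax⟩ := exists_max_image T (fun v => (dg G R v : ℤ) - ν v) ⟨v₀, hv₀⟩
      refine ⟨2 * ((dg G R v : ℤ) - ν v), ?_, ?_⟩
      · have := hmax v₀ hv₀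
        refine stab R.card R (nb G R v) (ν v) _ rfl hR (filter_subset _ _) (hν v hv) ?_ ?_
        · linarith
        · unfold dg; linarith
      · intro u hu
        have := hmax u hu
        linarith
  have h1 := DD_split G hTW
  rw [← hRdef] at h1
  have h2 : 2 * (DD G T R : ℤ) ≤ T.card * b + 2 * ∑ v ∈ T, (ν v : ℤ) := by
    unfold DD
    push_cast
    rw [mul_sum, mul_sum]
    calc _ ≤ ∑ v ∈ T, (b + 2 * (ν v : ℤ)) := sum_le_sum hb2
      _ = _ := by rw [sum_add_distrib]; simp
  have h3 : W.card = R.card + T.card := by rw [hRdef, card_sdiff_add_card_eq_card hTW]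
  have h4 : ∑ v ∈ T, (2 * ν v + dg G T v) = 2 * ∑ v ∈ T, ν v + DD G T T := by
    rw [sum_add_distrib, mul_sum]; rfl
  rw [h4, h1, h3]
  zify
  nlinarith [sq_nonneg ((R.card : ℤ) + T.card - b)]

lemma IsPk.erase1 {G : SimpleGraph V} {P : Finset (Finset V)} {W D : Finset V} (h : IsPk G P W) (hD : D ∈ P) :
    Pk G (P.card - 1) (P.biUnion id \ D) := by
  refine ⟨P.erase D, card_erase_of_mem hD, ?_, ?_⟩
  · intro E hE
    rw [mem_erase] at hE
    refine ⟨?_, (h.1 E hE.2).2⟩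
    rw [subset_sdiff]
    exact ⟨subset_biUnion_of_mem id hE.2, h.2 E hE.2 D hD hE.1⟩
  · intro E hE F hF hne
    exact h.2 E (mem_of_mem_erase hE) F (mem_of_mem_erase hF) hne

lemma IsPk.erase2 {G : SimpleGraph V} {P : Finset (Finset V)} {W D D' : Finset V} (h : IsPk G P W) (hD : D ∈ P)
    (hD' : D' ∈ P) (hne : D' ≠ D) :
    Pk G (P.card - 2) (P.biUnion id \ (D ∪ D')) := by
  refine ⟨(P.erase D).erase D', ?_, ?_, ?_⟩
  · rw [card_erase_of_mem (mem_erase.2 ⟨hne, hD'⟩), card_erase_of_mem hD]; omega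
  · intro E hE
    rw [mem_erase, mem_erase] at hE
    refine ⟨?_, (h.1 E hE.2.2).2⟩
    rw [subset_sdiff, disjoint_union_right]
    exact ⟨subset_biUnion_of_mem id hE.2.2, h.2 E hE.2.2 D hD hE.2.1, h.2 E hE.2.2 D' hD' hE.1⟩
  · intro E hE F hF hne
    exact h.2 E (mem_of_mem_erase (mem_of_mem_erase hE)) F (mem_of_mem_erase (mem_of_mem_erase hF)) hne

lemma biU_sub {G : SimpleGraph V} {P : Finset (Finset V)} {W : Finset V} (hP : IsPk G P W) : P.biUnion id ⊆ W := by
  intro u hu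
  rw [mem_biUnion] at hu
  obtain ⟨D, hD, hu⟩ := hu
  exact (hP.1 D hD).1 hu

lemma rest_TF {G : SimpleGraph V} {P : Finset (Finset V)} {W : Finset V} (hP : IsPk G P W)
    (hmax : ¬ Pk G (P.card + 1) W) : TF G (W \ P.biUnion id) := by
  intro a ha b hb c hc hab hbc hac
  rw [mem_sdiff] at ha hb hc
  apply hmax
  have : Pk G P.card (P.biUnion id) := ⟨P, rfl, fun D hD => ⟨subset_biUnion_of_mem id hD, (hP.1 D hD).2⟩, hP.2⟩
  refine this.insert hab hac hbc ha.2 hb.2 hc.2 (union_subset (biU_sub hP) ?_)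
  intro u hu
  simp at hu
  rcases hu with rfl | rfl | rfl <;> tauto

lemma swap1 {G : SimpleGraph V} {P : Finset (Finset V)} {W : Finset V} (hP : IsPk G P W)
    (hmax : ¬ Pk G (P.card + 1) W) {D : Finset V} (hD : D ∈ P) {x y : V} (hx : x ∈ D) (hy : y ∈ D) (hxy : x ≠ y)
    (hM : HasM G 3 (nb G (W \ P.biUnion id) x)) : ¬ HasM G 1 (nb G (W \ P.biUnion id) y) := by
  rintro ⟨p, hp, q, hq, hpq, _⟩
  obtain ⟨a, ha, b, hb, hab, haF, hbF⟩ := hM.exists_edge (F := {p, q}) (by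
    have : ({p, q} : Finset V).card ≤ 2 := card_le_two
    omega)
  rw [mem_nb, mem_sdiff] at hp hq ha hb
  have hTW := biU_sub hP
  have hDT : D ⊆ P.biUnion id := subset_biUnion_of_mem id hD
  have hxT := hDT hx
  have hyT := hDT hy
  have hk : 1 ≤ P.card := card_pos.2 ⟨D, hD⟩
  have h0 := hP.erase1 hD
  set T := P.biUnion id
  simp only [mem_insert, mem_singleton, not_or] at haF hbF
  have h1 := h0.insert (B := T \ D ∪ {y, p, q}) hp.2 hq.2 hpq (by simp [hy]) (by simp [hp]) (by simp [hq]) le_rfl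
  have h2 := h1.insert (B := W) ha.2 hb.2 hab (by simp; grind) (by simp; grind) (by simp; grind) (by
    intro u hu
    simp at hu
    grind)
  apply hmax
  convert h2 using 1
  omega

lemma swap2 {G : SimpleGraph V} {P : Finset (Finset V)} {W : Finset V} (hP : IsPk G P W)
    (hmax : ¬ Pk G (P.card + 1) W) {D D' : Finset V} (hD : D ∈ P) (hD' : D' ∈ P) (hne : D' ≠ D) {x x' y : V} (hx : x ∈ D) (hx' : x' ∈ D')
    (hy : y ∈ D') (hxy : x' ≠ y)
    (hM : HasM G 3 (nb G (W \ P.biUnion id) x)) (hM' : HasM G 3 (nb G (W \ P.biUnion id) x')) :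
    dg G D y ≤ 2 := by
  by_contra hcon
  have hD3 := (hP.1 D hD).2.card_eq
  have hall : ∀ u ∈ D, G.Adj y u := by
    have : nb G D y = D := eq_of_subset_of_card_le (filter_subset _ _) (by unfold dg at hcon; omega)
    intro u hu
    rw [← this, mem_nb] at hu
    exact hu.2
  obtain ⟨d, e, hde, hDe⟩ : ∃ d e, d ≠ e ∧ D.erase x = {d, e} := by
    rw [← card_eq_two, card_erase_of_mem hx, hD3]
  have hd : d ∈ D ∧ d ≠ x := by
    have : d ∈ D.erase x := by rw [hDe]; simp
    rw [mem_erase] at this; tauto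
  have he : e ∈ D ∧ e ≠ x := by
    have : e ∈ D.erase x := by rw [hDe]; simp
    rw [mem_erase] at this; tauto
  have hadj : G.Adj d e := (hP.1 D hD).2.isClique hd.1 he.1 hde
  obtain ⟨p, hp, q, hq, hpq, -, -⟩ := hM.exists_edge (F := ∅) (by simp)
  obtain ⟨a, ha, b, hb, hab, haF, hbF⟩ := hM'.exists_edge (F := {p, q}) (by
    have : ({p, q} : Finset V).card ≤ 2 := card_le_two
    omega)
  rw [mem_nb, mem_sdiff] at hp hq ha hb
  have hTW := biU_sub hP
  have hDT : D ⊆ P.biUnion id := subset_biUnion_of_mem id hD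
  have hDT' : D' ⊆ P.biUnion id := subset_biUnion_of_mem id hD'
  have hdis : ∀ u ∈ D, u ∉ D' := fun u h1 h2 => disjoint_left.1 (hP.2 D hD D' hD' hne.symm) h1 h2
  have hk : 2 ≤ P.card := by
    have := card_le_card (show ({D, D'} : Finset (Finset V)) ⊆ P by
      intro u hu; simp at hu; rcases hu with rfl | rfl <;> assumption)
    rwa [card_pair hne.symm] at this
  have h0 := hP.erase2 hD hD' hne
  set T := P.biUnion id
  simp only [mem_insert, mem_singleton, not_or] at haF hbF
  have h1 := h0.insert (B := T \ (D ∪ D') ∪ {y, d, e}) (hall d hd.1) (hall e he.1) hadj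
    (by simp [hy]) (by simp [hd]) (by simp [he]) le_rfl
  have h2 := h1.insert (B := (T \ (D ∪ D') ∪ {y, d, e}) ∪ {x, p, q}) hp.2 hq.2 hpq
    (by simp; grind) (by simp; grind) (by simp; grind) le_rfl
  have h3 := h2.insert (B := W) ha.2 hb.2 hab (by simp; grind) (by simp; grind) (by simp; grind) (by
    intro u hu
    have m1 := hTW (hDT hx)
    have m2 := hTW (hDT hd.1)
    have m3 := hTW (hDT he.1)
    have m4 := hTW (hDT' hx')
    have m5 := hTW (hDT' hy)
    simp only [mem_union, mem_sdiff, mem_insert, mem_singleton] at hu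
    rcases hu with (((hu | (rfl | rfl | rfl)) | (rfl | rfl | rfl)) | (rfl | rfl | rfl))
    · exact hTW hu.1
    all_goals tauto)
  apply hmax
  convert h3 using 1
  omega

lemma dg_biUnion {G : SimpleGraph V} {P : Finset (Finset V)} {W : Finset V} (hP : IsPk G P W) (v : V) :
    dg G (P.biUnion id) v = ∑ D ∈ P, dg G D v := by
  unfold dg nb
  simp_rw [card_filter]
  rw [sum_biUnion (t := id) (fun D hD E hE hne => hP.2 D hD E hE hne)]
  rfl

/-- some vertex of `D` sees a matching of size three in `R` -/
def Ty (G : SimpleGraph V) (R D : Finset V) : Prop := ∃ x ∈ D, HasM G 3 (nb G R x)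

lemma count2 {G : SimpleGraph V} {P : Finset (Finset V)} {W : Finset V} (hP : IsPk G P W)
    (hmax : ¬ Pk G (P.card + 1) W) (M : ℕ)
    (hM : ∀ v ∈ P.biUnion id, ¬ HasM G (M + 1) (nb G (W \ P.biUnion id) v)) :
    ∃ k1 k0 : ℕ, k1 + k0 = P.card ∧
      2 * DD G W W ≤ W.card ^ 2 + 2 * (k1 * (2 * M + 3 * P.card + 4 * k1 + 6 * k0) + k0 * (9 * P.card + 12)) := by
  set T := P.biUnion id with hT
  set R := W \ T with hRdef
  set k := P.card with hk
  set P1 := P.filter (fun D => Ty G R D) with hP1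
  set P0 := P.filter (fun D => ¬ Ty G R D) with hP0
  have hcard : P1.card + P0.card = k := card_filter_add_card_filter_not _
  refine ⟨P1.card, P0.card, hcard, ?_⟩
  let ν : V → ℕ := fun v => if HasM G 3 (nb G R v) then M else if HasM G 1 (nb G R v) then 2 else 0
  have hν : ∀ v ∈ T, ¬ HasM G (ν v + 1) (nb G R v) := by
    intro v hv
    simp only [ν]
    split_ifs with h1 h2
    · exact hM v hv
    · exact h1
    · exact h2
  refine (count1 (biU_sub hP) (rest_TF hP hmax) ν hν).trans ?_
  rw [← hT]
  have hdg3 : ∀ D ∈ P, ∀ v, dg G D v ≤ 3 := fun D hD v => (dg_le G D v).trans (hP.1 D hD).2.card_eq.le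
  have hdgT : ∀ v, dg G T v ≤ 3 * k := by
    intro v
    rw [hT, dg_biUnion hP]
    calc _ ≤ ∑ D ∈ P, 3 := sum_le_sum (fun D hD => hdg3 D hD v)
      _ = _ := by simp [hk]; ring
  have hsum : ∑ v ∈ T, (2 * ν v + dg G T v) = ∑ D ∈ P, ∑ v ∈ D, (2 * ν v + dg G T v) := by
    rw [hT, sum_biUnion (t := id) (fun D hD E hE hne => hP.2 D hD E hE hne)]
    rfl
  have hb0 : ∀ D ∈ P0, ∑ v ∈ D, (2 * ν v + dg G T v) ≤ 9 * k + 12 := by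
    intro D hD
    rw [hP0, mem_filter] at hD
    have hc := (hP.1 D hD.1).2.card_eq
    calc _ ≤ ∑ v ∈ D, (4 + 3 * k) := by
          apply sum_le_sum
          intro v hv
          have h1 := hdgT v
          have h2 : ν v ≤ 2 := by
            have : ¬ HasM G 3 (nb G R v) := fun h => hD.2 ⟨v, hv, h⟩
            simp only [ν, if_neg this]
            split_ifs <;> omega
          omega
      _ = _ := by rw [sum_const, hc]; simp; ring
  have hb1 : ∀ D ∈ P1, ∑ v ∈ D, (2 * ν v + dg G T v) ≤ 2 * M + 3 * k + 4 * P1.card + 6 * P0.card := by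
    intro D hD
    rw [hP1, mem_filter] at hD
    obtain ⟨hDP, x, hx, hx3⟩ := hD
    have hc := (hP.1 D hDP).2.card_eq
    rw [← add_sum_erase D _ hx]
    have h1 : 2 * ν x + dg G T x ≤ 2 * M + 3 * k := by
      have := hdgT x
      simp only [ν, if_pos hx3]
      omega
    have h2 : ∑ v ∈ D.erase x, (2 * ν v + dg G T v) ≤ ∑ v ∈ D.erase x, (2 * P1.card + 3 * P0.card) := by
      apply sum_le_sum
      intro y hy
      rw [mem_erase] at hy
      have hy1 := swap1 hP hmax hDP hx hy.2 hy.1.symm hx3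
      have hy3 : ¬ HasM G 3 (nb G R y) := fun h => hy1 (h.le (by omega))
      have e1 : ν y = 0 := by
        simp only [ν, if_neg hy3]
        exact if_neg hy1
      rw [e1, hT, dg_biUnion hP, ← sum_filter_add_sum_filter_not P (fun D => Ty G R D)]
      have e2 : ∑ E ∈ P1, dg G E y ≤ ∑ E ∈ P1, 2 := by
        apply sum_le_sum
        intro E hE
        rw [hP1, mem_filter] at hE
        obtain ⟨hEP, z, hz, hz3⟩ := hE
        by_cases hDE : D = E
        · subst hDE
          have : nb G D y ⊆ D.erase y := by
            intro u hu
            rw [mem_nb] at hu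
            exact mem_erase.2 ⟨hu.2.ne', hu.1⟩
          have := card_le_card this
          rw [card_erase_of_mem hy.2, hc] at this
          exact this
        · exact swap2 hP hmax hEP hDP hDE hz hx hy.2 hy.1.symm hz3 hx3
      have e3 : ∑ E ∈ P0, dg G E y ≤ ∑ E ∈ P0, 3 :=
        sum_le_sum (fun E hE => hdg3 E (mem_filter.1 hE).1 y)
      rw [sum_const, smul_eq_mul] at e2 e3
      rw [← hP1, ← hP0]
      omega
    rw [sum_const, card_erase_of_mem hx, hc, smul_eq_mul] at h2
    omega
  have htot : ∑ v ∈ T, (2 * ν v + dg G T v) ≤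
      P1.card * (2 * M + 3 * k + 4 * P1.card + 6 * P0.card) + P0.card * (9 * k + 12) := by
    rw [hsum, ← sum_filter_add_sum_filter_not P (fun D => Ty G R D)]
    have e1 := sum_le_sum hb1
    have e0 := sum_le_sum hb0
    rw [sum_const, smul_eq_mul] at e1 e0
    exact add_le_add e1 e0
  omega

/-- the number of colours -/
def rr (t n : ℕ) : ℕ := t.choose 2 + t * (n - t) + (n - t) ^ 2 / 4 + 2

lemma rr_succ (t n : ℕ) (h : t + 1 ≤ n) : rr (t + 1) n = rr t (n - 1) + (n - 1) := by
  unfold rr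
  obtain ⟨d, rfl⟩ := Nat.exists_eq_add_of_le h
  have e1 : t + 1 + d - (t + 1) = d := by omega
  have e2 : t + 1 + d - 1 - t = d := by omega
  have e3 : t + 1 + d - 1 = t + d := by omega
  rw [e1, e2, e3, Nat.choose_succ_succ' t 1, Nat.choose_one_right]
  ring

lemma rr_lower (t n : ℕ) (h : t ≤ n) : (n : ℤ) ^ 2 + 2 * t * n - t ^ 2 - 2 * t + 5 ≤ 4 * rr t n := by
  unfold rr
  obtain ⟨d, rfl⟩ := Nat.exists_eq_add_of_le h
  have e1 : t + d - t = d := by omega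
  rw [e1]
  have h1 : t.choose 2 * 2 = t * (t - 1) := by
    rw [Nat.choose_two_right, Nat.div_mul_cancel]
    exact (Nat.even_mul_pred_self t).two_dvd
  have h2 : d ^ 2 ≤ 4 * (d ^ 2 / 4) + 3 := by omega
  have h3 : (t.choose 2 * 2 : ℤ) = t * (t - 1) := by
    rcases t with _ | t
    · simp
    · have := congrArg (Nat.cast (R := ℤ)) h1
      push_cast at this ⊢
      simpa using this
  generalize d ^ 2 / 4 = a at *
  zify at h2
  push_cast
  nlinarith

lemma arith2 (t n k1 k0 k : ℤ) (ht : 1 ≤ t) (hn : 15 * t + 57 ≤ n) (h0 : 0 ≤ k0) (h1 : 0 ≤ k1)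
    (hk : k1 + k0 = k) (hkt : k ≤ t + 1) :
    2 * (k1 * (2 * (3 * t + 4) + 3 * k + 4 * k1 + 6 * k0) + k0 * (9 * k + 12)) < 2 * t * n - t ^ 2 - 2 * t + 5 := by
  subst hk
  have e1 : t * (15 * t + 57) ≤ t * n := mul_le_mul_of_nonneg_left hn (by linarith)
  have e2 : (k1 + k0) * (6 * t + 8 + 7 * (k1 + k0)) ≤ (t + 1) * (13 * t + 15) := by
    apply mul_le_mul <;> linarith
  have e3 : k0 * (4 * k1 + 2 * k0 + 4 - 6 * t) ≤ 12 := by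
    by_cases h4 : t ≤ 3
    · have : k0 * (4 * k1 + 2 * k0 + 4 - 6 * t) ≤ k0 * (8 - 2 * t) :=
        mul_le_mul_of_nonneg_left (by linarith) h0
      have : k0 * (8 - 2 * t) ≤ (t + 1) * (8 - 2 * t) := mul_le_mul_of_nonneg_right (by linarith) (by linarith)
      nlinarith [mul_nonneg (show 0 ≤ t - 1 by linarith) (show 0 ≤ 3 - t by linarith), sq_nonneg (2 * t - 3)]
    · have : k0 * (4 * k1 + 2 * k0 + 4 - 6 * t) ≤ 0 :=
        mul_nonpos_of_nonneg_of_nonpos h0 (by push Not at h4; have : 4 ≤ t := h4; linarith)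
      linarith
  nlinarith

lemma pk_conc {G : SimpleGraph V} {c : Sym2 V → ℕ} (h : RB G c) {t : ℕ} {W : Finset V} {P : Finset (Finset V)}
    (hP : IsPk G P W) (hc : P.card = t + 2) : Conc G c t W := by
  obtain ⟨D, hD⟩ : P.Nonempty := card_pos.1 (by omega)
  obtain ⟨p, q, w, hpq, hpw, hqw, rfl⟩ := SimpleGraph.is3Clique_iff.1 (hP.1 D hD).2
  have hDW := (hP.1 _ hD).1
  refine ⟨p, hDW (by simp), q, hDW (by simp), w, hDW (by simp), hpq.ne, ⟨hpw, ?_⟩, ⟨hqw, ?_⟩, ?_⟩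
  · intro hc
    have := h _ _ _ _ hpw hpq hc
    have := hpq.ne; have := hpw.ne; have := hqw.ne
    simp at *; grind
  · intro hc
    have := h _ _ _ _ hqw hpq hc
    have := hpq.ne; have := hpw.ne; have := hqw.ne
    simp at *; grind
  · refine ⟨P.erase {p, q, w}, by rw [card_erase_of_mem hD]; omega, ?_, ?_⟩
    · intro E hE
      rw [mem_erase] at hE
      have hdis := hP.2 E hE.2 _ hD hE.1
      refine ⟨?_, ?_⟩
      · rw [subset_sdiff]
        exact ⟨(hP.1 E hE.2).1, hdis⟩
      · have hcl := (hP.1 E hE.2).2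
        refine ⟨?_, hcl.card_eq⟩
        intro a ha b hb hne
        refine ⟨hcl.isClique ha hb hne, fun hc => ?_⟩
        have := h _ _ _ _ (hcl.isClique ha hb hne) hpq hc
        have hap := disjoint_left.1 hdis ha
        simp at this hap
        grind
    · intro E hE F hF hne
      exact hP.2 E (mem_of_mem_erase hE) F (mem_of_mem_erase hF) hne

lemma main {G : SimpleGraph V} {c : Sym2 V → ℕ} (h : RB G c) : ∀ (t : ℕ) (W : Finset V),
    15 * t + 57 ≤ W.card → 2 * rr t W.card ≤ DD G W W → Conc G c t W := by
  intro t
  induction t with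
  | zero =>
    intro W hW hD
    apply base h W (by omega)
    simpa [rr] using hD
  | succ t ih =>
    intro W hW hD
    by_cases hbig : Pk G (t + 1 + 2) W
    · obtain ⟨P, hc, hP⟩ := hbig
      exact pk_conc h hP hc
    -- a packing of maximum size
    obtain ⟨k, hkt, ⟨P, hPc, hP⟩, hmax⟩ : ∃ k, k ≤ t + 2 ∧ Pk G k W ∧ ¬ Pk G (k + 1) W := by
      by_contra hcon
      push Not at hcon
      have : ∀ k, k ≤ t + 3 → Pk G k W := by
        intro k
        induction k with
        | zero => intro _; exact Pk.zero G W
        | succ k ihk => intro hk; exact hcon k (by omega) (ihk (by omega))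
      exact hbig (this _ le_rfl)
    subst hPc
    by_cases hM : ∃ x ∈ P.biUnion id, HasM G (3 * t + 8) (nb G (W \ P.biUnion id) x)
    · obtain ⟨x, hx, hM⟩ := hM
      have hxW := biU_sub hP hx
      refine extend h hxW ((filter_subset _ _).trans sdiff_subset) (fun u hu => (mem_nb.1 hu).2) hM ?_
      have hc := card_erase_of_mem hxW
      apply ih
      · omega
      · have e1 := rr_succ t W.card (by omega)
        have e2 := DD_split G (singleton_subset_iff.2 hxW)
        rw [sdiff_singleton_eq_erase] at e2
        have e3 := DD_le G {x} (W.erase x)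
        have e4 : DD G {x} {x} = 0 := DD_eq_zero (by simp)
        rw [card_singleton, one_mul, hc] at e3
        rw [hc]
        omega
    · exfalso
      push Not at hM
      obtain ⟨k1, k0, hk, hle⟩ := count2 hP hmax (3 * t + 7) hM
      have e1 := rr_lower (t + 1) W.card (by omega)
      have e2 := arith2 (t + 1) W.card k1 k0 P.card (by omega) (by push_cast at *; omega) (by omega) (by omega)
        (by exact_mod_cast hk) (by push_cast at *; omega)
      zify at hle hD
      push_cast at *
      nlinarith

lemma final {c : Sym2 V → ℕ} {G : SimpleGraph V} (h : RB G c) {t : ℕ} {W : Finset V} (hC : Conc G c t W) :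
    RainbowIndepTrianglesIn (⊤ : SimpleGraph V) (t + 2) c := by
  obtain ⟨p, hp, q, hq, w, hw, hpq, hpw, hqw, P, hPc, hP1, hP2⟩ := hC
  set φ := c s(p, q) with hφ
  set G' := del G c φ with hG'
  have hg : ∀ D : P, ∃ g : Fin 3 → V, (∀ j, g j ∈ D.1) ∧ ∀ i j, i ≠ j → G'.Adj (g i) (g j) := by
    intro D
    obtain ⟨a, b, d, hab, had, hbd, hD⟩ := SimpleGraph.is3Clique_iff.1 (hP1 D.1 D.2).2
    refine ⟨![a, b, d], ?_, ?_⟩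
    · intro j
      rw [hD]
      fin_cases j <;> simp
    · intro i j hij
      fin_cases i <;> fin_cases j <;> simp_all [SimpleGraph.adj_comm]
  choose g hg1 hg2 using hg
  let e : Fin (t + 1) ≃ P := (P.equivFinOfCardEq hPc).symm
  let f : Fin (t + 2) → Fin 3 → V := Fin.cons ![p, q, w] (fun i => g (e i))
  have hgne : ∀ i j, g (e i) j ≠ p ∧ g (e i) j ≠ q ∧ g (e i) j ≠ w := by
    intro i j
    have := (hP1 _ (e i).2).1 (hg1 (e i) j)
    simp at this
    tauto
  have hinj : Function.Injective (fun x : Fin (t + 2) × Fin 3 => f x.1 x.2) := by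
    rintro ⟨i, j⟩ ⟨i', j'⟩ hij
    simp only at hij
    have n1 := hpw.ne
    have n2 := hqw.ne
    induction i using Fin.cases with
    | zero =>
      induction i' using Fin.cases with
      | zero =>
        simp only [f, Fin.cons_zero] at hij
        fin_cases j <;> fin_cases j' <;> simp_all
      | succ i' =>
        simp only [f, Fin.cons_zero, Fin.cons_succ] at hij
        have := hgne i' j'
        exfalso
        fin_cases j
        · exact this.1 hij.symm
        · exact this.2.1 hij.symm
        · exact this.2.2 hij.symm
    | succ i =>
      induction i' using Fin.cases with
      | zero =>
        simp only [f, Fin.cons_zero, Fin.cons_succ] at hij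
        have := hgne i j
        exfalso
        fin_cases j'
        · exact this.1 hij
        · exact this.2.1 hij
        · exact this.2.2 hij
      | succ i' =>
        simp only [f, Fin.cons_succ] at hij
        by_cases hii : i = i'
        · subst hii
          by_cases hjj : j = j'
          · rw [hjj]
          · exact absurd hij (hg2 (e i) j j' hjj).ne
        · exfalso
          have hne : (e i).1 ≠ (e i').1 := fun hh => hii (e.injective (Subtype.ext hh))
          have := disjoint_left.1 (hP2 _ (e i).2 _ (e i').2 hne) (hg1 (e i) j)
          rw [hij] at this
          exact this (hg1 (e i') j')
  have hadj : ∀ x : Fin (t + 2) × Fin 3, x ≠ (0, 0) → G'.Adj (f x.1 x.2) (f x.1 (x.2 + 1)) := by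
    rintro ⟨i, j⟩ hx
    induction i using Fin.cases with
    | zero =>
      simp only [f, Fin.cons_zero]
      fin_cases j
      · simp at hx
      · exact hqw
      · exact hpw.symm
    | succ i =>
      simp only [f, Fin.cons_succ]
      apply hg2
      exact (by decide : ∀ j : Fin 3, j ≠ j + 1) j
  have hsym : ∀ x y : Fin (t + 2) × Fin 3, s(f x.1 x.2, f x.1 (x.2 + 1)) = s(f y.1 y.2, f y.1 (y.2 + 1)) → x = y := by
    rintro ⟨i, j⟩ ⟨i', j'⟩ hxy
    rw [Sym2.eq_iff] at hxy
    rcases hxy with ⟨h1, _⟩ | ⟨h1, h2⟩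
    · exact hinj h1
    · have k1 := hinj (a₁ := (i, j)) (a₂ := (i', j' + 1)) h1
      have k2 := hinj (a₁ := (i, j + 1)) (a₂ := (i', j')) h2
      simp only [Prod.mk.injEq] at k1 k2
      exfalso
      obtain ⟨-, k1⟩ := k1
      obtain ⟨-, k2⟩ := k2
      exact (by decide : ∀ j j' : Fin 3, j = j' + 1 → j + 1 = j' → False) j j' k1 k2
  have h00 : c s(f 0 0, f 0 (0 + 1)) = φ := rfl
  refine ⟨f, hinj, ?_, ?_⟩
  · intro i
    simp only [SimpleGraph.top_adj]
    refine ⟨fun hh => ?_, fun hh => ?_, fun hh => ?_⟩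
    · have := hinj (a₁ := (i, 0)) (a₂ := (i, 1)) hh
      simp at this
    · have := hinj (a₁ := (i, 1)) (a₂ := (i, 2)) hh
      simp at this
    · have := hinj (a₁ := (i, 0)) (a₂ := (i, 2)) hh
      simp at this
  · intro x y hxy
    simp only at hxy
    by_cases hx : x = (0, 0)
    · by_cases hy : y = (0, 0)
      · rw [hx, hy]
      · have := (hadj y hy).2
        rw [← hxy, hx] at this
        exact absurd h00 this
    · by_cases hy : y = (0, 0)
      · have := (hadj x hx).2
        rw [hxy, hy] at this
        exact absurd h00 this
      · exact hsym x y (h _ _ _ _ (hadj x hx).1 (hadj y hy).1 hxy)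

lemma exists_rep {n r : ℕ} {c : Sym2 (Fin n) → ℕ} (h : UsesExactly n r c) :
    ∃ G : SimpleGraph (Fin n), RB G c ∧ DD G univ univ = 2 * r := by
  obtain ⟨-, h⟩ := h
  choose e he hc using h
  let S : Finset (Sym2 (Fin n)) := (univ : Finset (Fin r)).image (fun j => e j.1 j.2)
  have hS : ∀ x ∈ S, ∃ j, ∃ hj : j < r, e j hj = x := by
    intro x hx
    simp only [S, mem_image, mem_univ, true_and] at hx
    obtain ⟨j, hj⟩ := hx
    exact ⟨j.1, j.2, hj⟩
  have hinj : Set.InjOn c (S : Set (Sym2 (Fin n))) := by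
    intro x hx y hy hxy
    obtain ⟨j, hj, rfl⟩ := hS x hx
    obtain ⟨k, hk, rfl⟩ := hS y hy
    rw [hc, hc] at hxy
    subst hxy
    rfl
  have hScard : S.card = r := by
    rw [card_image_of_injective, card_univ, Fintype.card_fin]
    intro i j hij
    have := congrArg c hij
    simp only [hc] at this
    exact Fin.ext this
  let G : SimpleGraph (Fin n) := SimpleGraph.fromEdgeSet (S : Set (Sym2 (Fin n)))
  have hE : G.edgeFinset = S := by
    ext x
    rw [SimpleGraph.mem_edgeFinset, SimpleGraph.edgeSet_fromEdgeSet]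
    constructor
    · exact fun hx => hx.1
    · intro hx
      refine ⟨hx, ?_⟩
      obtain ⟨j, hj, rfl⟩ := hS x hx
      exact SimpleGraph.not_isDiag_of_mem_edgeSet _ (he j hj)
  refine ⟨G, ?_, ?_⟩
  · intro a b a' b' h1 h2 h3
    rw [SimpleGraph.fromEdgeSet_adj] at h1 h2
    exact hinj h1.1 h2.1 h3
  · have key : ∑ v, G.degree v = 2 * r := by
      have hE2 : G.edgeFinset.card = r := (congrArg Finset.card hE).trans hScard
      refine Eq.trans G.sum_degrees_eq_twice_card_edges ?_
      congr 1
      rw [← hE2]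
      congr!
    rw [← key]
    unfold DD dg nb
    refine sum_congr rfl fun v _ => ?_
    rw [← SimpleGraph.card_neighborFinset_eq_degree, SimpleGraph.neighborFinset_eq_filter]
    congr!

end AR

/-- For `t ≥ 0`, `n ≥ 15t + 57` and `r = C(t,2) + t(n-t) + ⌊(n-t)²/4⌋ + 2`, every
edge-coloring of `K_n` using exactly `r` colors contains `t+2` pairwise vertex-disjoint
triangles whose `3(t+2)` edges receive pairwise distinct colors. -/
theorem antiRamsey_indep_triangles_upper (t n r : ℕ) (hn : 15 * t + 57 ≤ n)
    (hr : r = t.choose 2 + t * (n - t) + (n - t) ^ 2 / 4 + 2) :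
    ∀ c : Sym2 (Fin n) → ℕ, UsesExactly n r c →
      RainbowIndepTrianglesIn (⊤ : SimpleGraph (Fin n)) (t + 2) c := by
  intro c hc
  obtain ⟨G, hG, hD⟩ := AR.exists_rep hc
  refine AR.final hG (AR.main hG t Finset.univ ?_ ?_)
  · rw [Finset.card_univ, Fintype.card_fin]
    exact hn
  · rw [hD, Finset.card_univ, Fintype.card_fin, hr]
    exact le_rfl
end

section
/- Let t ≥ 0 and n ≥ 15t + 57 be integers. Let G be a simple graph on n vertices with e(G) ≥ C(t,2) + t(n−t) + ⌊(n−t)²/4⌋ + 2 that contains no t+2 pairwise vertex-disjoint triangles. Let M be any family of t+1 pairwise vertex-disjoint triangles in G, let D be the induced subgraph of G on the vertices not covered by M, let 𝓜 be a maximum matching of D, and let A be the set of triangles of M that contain a vertex friendly in G with at least two distinct edges of 𝓜. Then |A| ≥ t. -/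
/-- `G` contains `k` pairwise vertex-disjoint triangles. -/
def HasIndepTriangles {V : Type*} (G : SimpleGraph V) (k : ℕ) : Prop :=
  ∃ f : Fin k → Fin 3 → V,
    Function.Injective (fun p : Fin k × Fin 3 => f p.1 p.2) ∧
    ∀ i, G.Adj (f i 0) (f i 1) ∧ G.Adj (f i 1) (f i 2) ∧ G.Adj (f i 0) (f i 2)

/-- The vertex `w` is friendly with the edge `e`: it is adjacent to both endpoints. -/
def Friendly {V : Type*} (G : SimpleGraph V) (w : V) (e : Sym2 V) : Prop :=
  ∀ x ∈ e, G.Adj w x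

/-- `F` is a matching of the subgraph of `G` induced on `S`. -/
def IsMatchingOn {V : Type*} (G : SimpleGraph V) (S : Set V) (F : Finset (Sym2 V)) : Prop :=
  (∀ e ∈ F, e ∈ G.edgeSet ∧ ∀ x ∈ e, x ∈ S) ∧
  ((F : Set (Sym2 V)).Pairwise fun e f => ∀ v, v ∈ e → v ∉ f)

theorem repl_tri {V : Type*} {G : SimpleGraph V} {s r : ℕ} (f : Fin s → Fin 3 → V)
    (hinj : Function.Injective fun p : Fin s × Fin 3 => f p.1 p.2)
    (htri : ∀ i, G.Adj (f i 0) (f i 1) ∧ G.Adj (f i 1) (f i 2) ∧ G.Adj (f i 0) (f i 2))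
    (R : Finset (Fin s)) (g : Fin r → Fin 3 → V)
    (ginj : Function.Injective fun p : Fin r × Fin 3 => g p.1 p.2)
    (gtri : ∀ i, G.Adj (g i 0) (g i 1) ∧ G.Adj (g i 1) (g i 2) ∧ G.Adj (g i 0) (g i 2))
    (hr : r = R.card + 1) (hdis : ∀ i, i ∉ R → ∀ j p q, f i j ≠ g p q) :
    HasIndepTriangles G (s + 1) := by
  classical
  have hc : Fintype.card ({i : Fin s // i ∉ R} ⊕ Fin r) = s + 1 := by
    have h1 : R.card ≤ s := by simpa using R.card_le_univ
    rw [Fintype.card_sum, Fintype.card_subtype_compl]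
    simp
    omega
  let E := (Fintype.equivFinOfCardEq hc).symm
  let h : ({i : Fin s // i ∉ R} ⊕ Fin r) → Fin 3 → V := Sum.elim (fun i => f i.1) g
  refine ⟨fun k => h (E k), ?_, ?_⟩
  · rintro ⟨k, j⟩ ⟨k', j'⟩ hk
    simp only at hk
    have key : ∀ x x' : ({i : Fin s // i ∉ R} ⊕ Fin r), h x j = h x' j' → x = x' ∧ j = j' := by
      rintro (x | x) (x' | x') hx
      · have := @hinj (x.1, j) (x'.1, j') hx
        simp only [Prod.mk.injEq] at this
        exact ⟨by rw [Subtype.ext this.1], this.2⟩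
      · exact absurd hx (hdis x.1 x.2 _ _ _)
      · exact absurd hx.symm (hdis x'.1 x'.2 _ _ _)
      · have := @ginj (x, j) (x', j') hx
        simp only [Prod.mk.injEq] at this
        exact ⟨by rw [this.1], this.2⟩
    obtain ⟨h1, h2⟩ := key _ _ hk
    rw [E.injective h1, h2]
  · intro k
    show G.Adj (h (E k) 0) (h (E k) 1) ∧ G.Adj (h (E k) 1) (h (E k) 2) ∧
      G.Adj (h (E k) 0) (h (E k) 2)
    rcases E k with x | x
    · exact htri x.1
    · exact gtri x

theorem inj_one {V : Type*} {a b c : V} (h : [a, b, c].Nodup) :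
    Function.Injective fun p : Fin 1 × Fin 3 => (![![a, b, c]] : Fin 1 → Fin 3 → V) p.1 p.2 := by
  simp at h
  rintro ⟨i, j⟩ ⟨i', j'⟩ hk
  fin_cases i <;> fin_cases i' <;> fin_cases j <;> fin_cases j' <;> simp at hk ⊢ <;> grind

theorem inj_two {V : Type*} {a b c a' b' c' : V} (h : [a, b, c, a', b', c'].Nodup) :
    Function.Injective fun p : Fin 2 × Fin 3 =>
      (![![a, b, c], ![a', b', c']] : Fin 2 → Fin 3 → V) p.1 p.2 := by
  simp at h
  rintro ⟨i, j⟩ ⟨i', j'⟩ hk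
  fin_cases i <;> fin_cases i' <;> fin_cases j <;> fin_cases j' <;> simp at hk ⊢ <;> grind

theorem inj_three {V : Type*} {a b c a' b' c' a2 b2 c2 : V}
    (h : [a, b, c, a', b', c', a2, b2, c2].Nodup) :
    Function.Injective fun p : Fin 3 × Fin 3 =>
      (![![a, b, c], ![a', b', c'], ![a2, b2, c2]] : Fin 3 → Fin 3 → V) p.1 p.2 := by
  simp at h
  rintro ⟨i, j⟩ ⟨i', j'⟩ hk
  fin_cases i <;> fin_cases i' <;> fin_cases j <;> fin_cases j' <;> simp at hk ⊢ <;> grind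

theorem fin3_split (j : Fin 3) : ∃ j1 j2 : Fin 3, j1 ≠ j ∧ j2 ≠ j ∧ j1 ≠ j2 ∧
    ∀ g : Fin 3 → ℕ, ∑ x, g x = g j + g j1 + g j2 := by
  fin_cases j
  · exact ⟨1, 2, by decide, by decide, by decide, fun g => by simp [Fin.sum_univ_three]⟩
  · exact ⟨0, 2, by decide, by decide, by decide, fun g => by
      simp [Fin.sum_univ_three]; ring⟩
  · exact ⟨0, 1, by decide, by decide, by decide, fun g => by
      simp [Fin.sum_univ_three]; ring⟩

theorem arith_fin (t n N s a b m e : ℕ) (hn : 15 * t + 57 ≤ n) (hs : s = t + 1) (hN : n = 3 * s + N)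
    (hab : s = a + b) (hb : 2 ≤ b) (hm : 2 * m ≤ N)
    (he : t.choose 2 + t * (n - t) + (n - t) ^ 2 / 4 + 2 ≤ e)
    (hu : (2 * e : ℤ) ≤ 6 * s + 7 * a * (a - 1) + 18 * a * b + 9 * b * (b - 1)
      + 2 * (2 * a * N + b * (3 * N - 3 * m + 3)) + 2 * m * (N - m)) : False := by
  have h1 : n - t = N + 2 * s + 1 := by omega
  rw [h1] at he
  have h2 : (2 * t.choose 2 : ℤ) = t * (t - 1) := by
    clear * -
    induction t with
    | zero => simp
    | succ k ih =>
      rw [Nat.choose_succ_succ' k 1]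
      push_cast
      simp
      linarith
  have h3 : (N + 2 * s + 1) ^ 2 ≤ 4 * ((N + 2 * s + 1) ^ 2 / 4) + 1 := by
    generalize N + 2 * s + 1 = x
    rcases Nat.even_or_odd' x with ⟨y, rfl | rfl⟩
    · have : (2 * y) ^ 2 = 4 * y ^ 2 := by ring
      omega
    · have : (2 * y + 1) ^ 2 = 4 * (y ^ 2 + y) + 1 := by ring
      omega
  have h4 : (12 * s + 42 : ℤ) ≤ N := by omega
  generalize (N + 2 * s + 1) ^ 2 / 4 = z at *
  generalize t.choose 2 = w at *
  have hsz : (t : ℤ) = a + b - 1 := by omega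
  have hsz2 : (s : ℤ) = a + b := by omega
  zify at he h3
  rw [hsz] at h2 he
  rw [hsz2] at h3 he hu h4
  have hb' : (2 : ℤ) ≤ b := by exact_mod_cast hb
  have ha' : (0 : ℤ) ≤ a := by positivity
  have h5 : (0 : ℤ) ≤ (b - 1) * (N - (12 * (a + b) + 42)) := mul_nonneg (by linarith) (by linarith)
  have h6 : (0 : ℤ) ≤ (N - 3 * b - 2 * m) ^ 2 := sq_nonneg _
  have h7 : (0 : ℤ) ≤ a * (b - 2) := mul_nonneg ha' (by linarith)
  have h8 : (0 : ℤ) ≤ (b - 2) * (b - 2) := mul_nonneg (by linarith) (by linarith)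
  nlinarith

/-- Claim 1: for `n ≥ 15t + 57` and `G` on `n` vertices with
`e(G) ≥ C(t,2) + t(n-t) + ⌊(n-t)²/4⌋ + 2` edges and no `t+2` disjoint triangles, for any
family `M` of `t+1` disjoint triangles, maximum matching `F` of `D`, and `A` the set of
triangles of `M` containing a vertex friendly with two edges of `F`: `|A| ≥ t`. -/
theorem claim1_A_large (t n : ℕ) (hn : 15 * t + 57 ≤ n) (G : SimpleGraph (Fin n))
    (he : t.choose 2 + t * (n - t) + (n - t) ^ 2 / 4 + 2 ≤ G.edgeSet.ncard)
    (hG : ¬ HasIndepTriangles G (t + 2))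
    (f : Fin (t + 1) → Fin 3 → Fin n)
    (hinj : Function.Injective fun p : Fin (t + 1) × Fin 3 => f p.1 p.2)
    (htri : ∀ i, G.Adj (f i 0) (f i 1) ∧ G.Adj (f i 1) (f i 2) ∧ G.Adj (f i 0) (f i 2))
    (Dset : Set (Fin n)) (hDset : Dset = {x | ∀ i j, f i j ≠ x})
    (F : Finset (Sym2 (Fin n))) (hF : IsMatchingOn G Dset F)
    (hFmax : ∀ F' : Finset (Sym2 (Fin n)), IsMatchingOn G Dset F' → F'.card ≤ F.card)
    (A : Finset (Fin (t + 1)))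
    (hA : ∀ i, i ∈ A ↔ ∃ j : Fin 3, ∃ e₁ ∈ F, ∃ e₂ ∈ F,
      e₁ ≠ e₂ ∧ Friendly G (f i j) e₁ ∧ Friendly G (f i j) e₂) :
    t ≤ A.card := by
  classical
  by_contra hlt
  push Not at hlt
  have hadj : ∀ i j j', j ≠ j' → G.Adj (f i j) (f i j') := by
    intro i j j' hj
    obtain ⟨h1, h2, h3⟩ := htri i
    fin_cases j <;> fin_cases j' <;> simp at hj ⊢ <;> first | assumption | (symm; assumption)
  have hfne : ∀ i j i' j', (i ≠ i' ∨ j ≠ j') → f i j ≠ f i' j' := by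
    intro i j i' j' h1 h2
    have := @hinj (i, j) (i', j') h2
    simp only [Prod.mk.injEq] at this
    tauto
  have hfD : ∀ i j, f i j ∉ Dset := by
    intro i j h
    rw [hDset] at h
    exact h i j rfl
  have hfD' : ∀ x, x ∉ Dset → ∃ i j, f i j = x := by
    intro x hx
    rw [hDset] at hx
    simpa using hx
  have hpr : ∀ e : Sym2 (Fin n), ∃ x y, e = s(x, y) := by
    intro e
    induction e using Sym2.ind with
    | _ x y => exact ⟨x, y, rfl⟩
  choose p r hpr using hpr
  have hmem : ∀ e x, x ∈ e ↔ x = p e ∨ x = r e := by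
    intro e x
    conv_lhs => rw [hpr e]
    simp
  have hpD : ∀ e ∈ F, p e ∈ Dset := fun e he => (hF.1 e he).2 _ ((hmem _ _).2 (Or.inl rfl))
  have hrD : ∀ e ∈ F, r e ∈ Dset := fun e he => (hF.1 e he).2 _ ((hmem _ _).2 (Or.inr rfl))
  have hprA : ∀ e ∈ F, G.Adj (p e) (r e) := by
    intro e he
    have := (hF.1 e he).1
    rw [hpr e] at this
    simpa using this
  have hFdis : ∀ e ∈ F, ∀ e' ∈ F, e ≠ e' → ∀ v, v ∈ e → v ∉ e' := fun e he e' he' h =>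
    hF.2 he he' h
  have hFd : ∀ e ∈ F, ∀ e' ∈ F, e ≠ e' → p e ≠ p e' ∧ p e ≠ r e' ∧ r e ≠ p e' ∧ r e ≠ r e' := by
    intro e he e' he' h
    have h1 := hFdis e he e' he' h (p e) ((hmem _ _).2 (Or.inl rfl))
    have h2 := hFdis e he e' he' h (r e) ((hmem _ _).2 (Or.inr rfl))
    rw [hmem] at h1 h2
    tauto
  have hfr : ∀ w e, Friendly G w e ↔ G.Adj w (p e) ∧ G.Adj w (r e) := by
    intro w e
    unfold Friendly
    simp only [hmem]
    constructor
    · intro h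
      exact ⟨h _ (Or.inl rfl), h _ (Or.inr rfl)⟩
    · rintro ⟨h1, h2⟩ x (rfl | rfl) <;> assumption
  have fact1 : ∀ x ∈ Dset, ∀ y ∈ Dset, ∀ z ∈ Dset,
      G.Adj x y → G.Adj y z → G.Adj x z → False := by
    intro x hx y hy z hz h1 h2 h3
    apply hG
    refine repl_tri f hinj htri ∅ ![![x, y, z]] (inj_one ?_) ?_ (by simp) ?_
    · have := h1.ne
      have := h2.ne
      have := h3.ne
      simp
      tauto
    · intro i
      fin_cases i
      exact ⟨h1, h2, h3⟩
    · intro i _ j a b hh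
      have : ![![x, y, z]] a b ∈ Dset := by
        fin_cases a; fin_cases b <;> simpa
      rw [← hh] at this
      exact hfD _ _ this
  have two : ∀ i (a b c a' b' c' : Fin n), G.Adj a b → G.Adj b c → G.Adj a c →
      G.Adj a' b' → G.Adj b' c' → G.Adj a' c' → [a, b, c, a', b', c'].Nodup →
      (∀ x ∈ [a, b, c, a', b', c'], x ∈ Dset ∨ ∃ j, x = f i j) → False := by
    intro i a b c a' b' c' h1 h2 h3 h4 h5 h6 hnd hin
    apply hG
    refine repl_tri f hinj htri {i} ![![a, b, c], ![a', b', c']] (inj_two hnd) ?_ (by simp) ?_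
    · intro k
      fin_cases k
      · exact ⟨h1, h2, h3⟩
      · exact ⟨h4, h5, h6⟩
    · intro i' hi' j u v hh
      have : ![![a, b, c], ![a', b', c']] u v ∈ [a, b, c, a', b', c'] := by
        fin_cases u <;> fin_cases v <;> simp
      rw [← hh] at this
      rcases hin _ this with h | ⟨j', h⟩
      · exact hfD _ _ h
      · simp only [Finset.mem_singleton] at hi'
        exact hfne _ _ _ _ (Or.inl hi') h
  have three : ∀ i i' (a b c a' b' c' a2 b2 c2 : Fin n), i ≠ i' → G.Adj a b → G.Adj b c →
      G.Adj a c → G.Adj a' b' → G.Adj b' c' → G.Adj a' c' → G.Adj a2 b2 → G.Adj b2 c2 →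
      G.Adj a2 c2 → [a, b, c, a', b', c', a2, b2, c2].Nodup →
      (∀ x ∈ [a, b, c, a', b', c', a2, b2, c2], x ∈ Dset ∨ (∃ j, x = f i j) ∨ ∃ j, x = f i' j) →
      False := by
    intro i i' a b c a' b' c' a2 b2 c2 hii h1 h2 h3 h4 h5 h6 h7 h8 h9 hnd hin
    apply hG
    refine repl_tri f hinj htri {i, i'} ![![a, b, c], ![a', b', c'], ![a2, b2, c2]]
      (inj_three hnd) ?_ (by simp [hii]) ?_
    · intro k
      fin_cases k
      · exact ⟨h1, h2, h3⟩
      · exact ⟨h4, h5, h6⟩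
      · exact ⟨h7, h8, h9⟩
    · intro k hk j u v hh
      have : ![![a, b, c], ![a', b', c'], ![a2, b2, c2]] u v ∈
          [a, b, c, a', b', c', a2, b2, c2] := by
        fin_cases u <;> fin_cases v <;> simp
      rw [← hh] at this
      simp only [Finset.mem_insert, Finset.mem_singleton, not_or] at hk
      rcases hin _ this with h | ⟨j', h⟩ | ⟨j', h⟩
      · exact hfD _ _ h
      · exact hfne _ _ _ _ (Or.inl hk.1) h
      · exact hfne _ _ _ _ (Or.inl hk.2) h
  have hneD : ∀ i j x, x ∈ Dset → f i j ≠ x := by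
    rintro i j x hx rfl
    exact hfD _ _ hx
  have fact3 : ∀ i j j', j ≠ j' → ∀ e ∈ F, ∀ e' ∈ F, e ≠ e' → Friendly G (f i j) e →
      Friendly G (f i j') e' → False := by
    intro i j j' hj e he e' he' hee h1 h2
    rw [hfr] at h1 h2
    refine two i (f i j) (p e) (r e) (f i j') (p e') (r e') h1.1 (hprA e he) h1.2 h2.1
      (hprA e' he') h2.2 ?_ ?_
    · have a1 := hfne i j i j' (Or.inr hj)
      have a2 := hFd e he e' he' hee
      have a3 := hneD i j _ (hpD e he)
      have a4 := hneD i j _ (hrD e he)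
      have a5 := hneD i j _ (hpD e' he')
      have a6 := hneD i j _ (hrD e' he')
      have b3 := hneD i j' _ (hpD e he)
      have b4 := hneD i j' _ (hrD e he)
      have b5 := hneD i j' _ (hpD e' he')
      have b6 := hneD i j' _ (hrD e' he')
      have c1 := (hprA e he).ne
      have c2 := (hprA e' he').ne
      simp
      grind
    · simp only [List.mem_cons, List.not_mem_nil, or_false]
      rintro x (rfl | rfl | rfl | rfl | rfl | rfl)
      · exact Or.inr ⟨_, rfl⟩
      · exact Or.inl (hpD e he)
      · exact Or.inl (hrD e he)
      · exact Or.inr ⟨_, rfl⟩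
      · exact Or.inl (hpD e' he')
      · exact Or.inl (hrD e' he')
  have fact4 : ∀ i j j1 j2, j1 ≠ j → j2 ≠ j → j1 ≠ j2 → ∀ e ∈ F, Friendly G (f i j) e →
      ∀ u ∈ Dset, u ∉ e → G.Adj (f i j1) u → G.Adj (f i j2) u → False := by
    intro i j j1 j2 h1 h2 h12 e he hfe u hu hue ha1 ha2
    rw [hfr] at hfe
    rw [hmem] at hue
    refine two i (f i j) (p e) (r e) (f i j1) (f i j2) u hfe.1 (hprA e he) hfe.2
      (hadj i _ _ h12) ha2 ha1 ?_ ?_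
    · have a1 := hfne i j1 i j (Or.inr h1)
      have a2 := hfne i j2 i j (Or.inr h2)
      have a3 := hfne i j1 i j2 (Or.inr h12)
      have b3 := fun j => hneD i j _ (hpD e he)
      have b4 := fun j => hneD i j _ (hrD e he)
      have b5 := fun j => hneD i j _ hu
      have c1 := (hprA e he).ne
      simp
      grind
    · simp only [List.mem_cons, List.not_mem_nil, or_false]
      rintro x (rfl | rfl | rfl | rfl | rfl | rfl)
      · exact Or.inr ⟨_, rfl⟩
      · exact Or.inl (hpD e he)
      · exact Or.inl (hrD e he)
      · exact Or.inr ⟨_, rfl⟩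
      · exact Or.inr ⟨_, rfl⟩
      · exact Or.inl hu
  have fact5 : ∀ i i' j j1 j2 j' j1', i ≠ i' → j1 ≠ j → j2 ≠ j → j1 ≠ j2 → j1' ≠ j' →
      ∀ e ∈ F, ∀ e' ∈ F, e ≠ e' → Friendly G (f i j) e → Friendly G (f i' j') e' →
      G.Adj (f i j1) (f i' j1') → G.Adj (f i j2) (f i' j1') → False := by
    intro i i' j j1 j2 j' j1' hii h1 h2 h12 h1' e he e' he' hee hfe hfe' ha1 ha2
    rw [hfr] at hfe hfe'
    refine three i i' (f i j) (p e) (r e) (f i' j') (p e') (r e') (f i j1) (f i j2) (f i' j1') hii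
      hfe.1 (hprA e he) hfe.2 hfe'.1 (hprA e' he') hfe'.2 (hadj i _ _ h12) ha2 ha1 ?_ ?_
    · have a1 := hfne i j1 i j (Or.inr h1)
      have a2 := hfne i j2 i j (Or.inr h2)
      have a3 := hfne i j1 i j2 (Or.inr h12)
      have a4 := hfne i' j1' i' j' (Or.inr h1')
      have a5 := fun j j' => hfne i j i' j' (Or.inl hii)
      have a6 := hFd e he e' he' hee
      have b3 := fun i j => hneD i j _ (hpD e he)
      have b4 := fun i j => hneD i j _ (hrD e he)
      have b5 := fun i j => hneD i j _ (hpD e' he')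
      have b6 := fun i j => hneD i j _ (hrD e' he')
      have c1 := (hprA e he).ne
      have c2 := (hprA e' he').ne
      simp
      grind
    · simp only [List.mem_cons, List.not_mem_nil, or_false]
      rintro x (rfl | rfl | rfl | rfl | rfl | rfl | rfl | rfl | rfl)
      · exact Or.inr (Or.inl ⟨_, rfl⟩)
      · exact Or.inl (hpD e he)
      · exact Or.inl (hrD e he)
      · exact Or.inr (Or.inr ⟨_, rfl⟩)
      · exact Or.inl (hpD e' he')
      · exact Or.inl (hrD e' he')
      · exact Or.inr (Or.inl ⟨_, rfl⟩)
      · exact Or.inr (Or.inl ⟨_, rfl⟩)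
      · exact Or.inr (Or.inr ⟨_, rfl⟩)
  obtain ⟨D, hD⟩ : ∃ D : Finset (Fin n), ∀ x, x ∈ D ↔ x ∈ Dset :=
    ⟨Finset.univ.filter (· ∈ Dset), by simp⟩
  obtain ⟨U, hU⟩ : ∃ U : Finset (Fin n), ∀ x, x ∈ U ↔ x ∈ Dset ∧ ∀ e ∈ F, x ∉ e :=
    ⟨Finset.univ.filter (fun x => x ∈ Dset ∧ ∀ e ∈ F, x ∉ e), by simp⟩
  have fact2 : ∀ x ∈ U, ∀ y ∈ U, ¬ G.Adj x y := by
    intro x hx y hy hxy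
    rw [hU] at hx hy
    have hnot : s(x, y) ∉ F := fun h => hx.2 _ h (by simp)
    have := hFmax (insert s(x, y) F) ⟨?_, ?_⟩
    · rw [Finset.card_insert_of_notMem hnot] at this
      omega
    · intro e he
      rw [Finset.mem_insert] at he
      rcases he with rfl | he
      · refine ⟨by simpa using hxy, ?_⟩
        intro z hz
        rw [Sym2.mem_iff] at hz
        rcases hz with rfl | rfl
        · exact hx.1
        · exact hy.1
      · exact hF.1 e he
    · intro e he e' he' hee v hv hv'
      simp only [Finset.coe_insert, Set.mem_insert_iff, Finset.mem_coe] at he he'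
      rcases he with rfl | he <;> rcases he' with rfl | he'
      · exact hee rfl
      · rw [Sym2.mem_iff] at hv
        rcases hv with rfl | rfl
        · exact hx.2 _ he' hv'
        · exact hy.2 _ he' hv'
      · rw [Sym2.mem_iff] at hv'
        rcases hv' with rfl | rfl
        · exact hx.2 _ he hv
        · exact hy.2 _ he hv
      · exact hFdis e he e' he' hee v hv hv'
  have sumV : ∀ g : Fin n → ℕ, ∑ x, g x = ∑ i, ∑ j, g (f i j) + ∑ x ∈ D, g x := by
    intro g
    have h1 : ∑ i, ∑ j, g (f i j) =
        ∑ x ∈ Finset.univ.image (fun p : Fin (t + 1) × Fin 3 => f p.1 p.2), g x := by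
      rw [Finset.sum_image (fun a _ b _ h => hinj h), Fintype.sum_prod_type]
    rw [h1, ← Finset.sum_union]
    · apply Finset.sum_congr _ (fun _ _ => rfl)
      ext x
      simp only [Finset.mem_univ, Finset.mem_union, Finset.mem_image, true_and, true_iff, Prod.exists]
      by_cases hx : x ∈ Dset
      · exact Or.inr ((hD x).2 hx)
      · exact Or.inl (hfD' x hx)
    · rw [Finset.disjoint_left]
      intro x hx hx'
      simp only [Finset.mem_univ, Finset.mem_image, true_and, Prod.exists] at hx
      obtain ⟨i, j, rfl⟩ := hx
      exact hfD _ _ ((hD _).1 hx')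
  have sumD : ∀ g : Fin n → ℕ, ∑ x ∈ D, g x = ∑ e ∈ F, (g (p e) + g (r e)) + ∑ x ∈ U, g x := by
    intro g
    have h1 : ∑ e ∈ F, (g (p e) + g (r e)) = ∑ x ∈ F.biUnion (fun e => {p e, r e}), g x := by
      rw [Finset.sum_biUnion]
      · apply Finset.sum_congr rfl
        intro e he
        rw [Finset.sum_pair (hprA e he).ne]
      · intro e he e' he' hee
        have := hFd e he e' he' hee
        simp only [Function.onFun]
        rw [Finset.disjoint_left]
        simp
        tauto
    rw [h1, ← Finset.sum_union]
    · apply Finset.sum_congr _ (fun _ _ => rfl)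
      ext x
      simp only [Finset.mem_union, Finset.mem_biUnion, Finset.mem_insert, Finset.mem_singleton, hD, hU, hmem]
      constructor
      · intro hx
        by_cases h : ∃ e ∈ F, x = p e ∨ x = r e
        · exact Or.inl h
        · push Not at h
          exact Or.inr ⟨hx, fun e he => by have := h e he; tauto⟩
      · rintro (⟨e, he, rfl | rfl⟩ | h)
        · exact hpD e he
        · exact hrD e he
        · exact h.1
    · rw [Finset.disjoint_left]
      intro x hx hx'
      simp only [Finset.mem_biUnion, Finset.mem_insert, Finset.mem_singleton] at hx
      obtain ⟨e, he, hx⟩ := hx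
      exact ((hU x).1 hx').2 e he ((hmem _ _).2 hx)
  have cardV : n = 3 * (t + 1) + D.card := by
    have := sumV (fun _ => 1)
    simp at this
    omega
  have cardD : D.card = 2 * F.card + U.card := by
    have := sumD (fun _ => 1)
    simp at this
    omega
  obtain ⟨q, hq⟩ : ∃ q : Fin n → Fin n → ℕ, ∀ x y, q x y = if G.Adj x y then 1 else 0 :=
    ⟨_, fun _ _ => rfl⟩
  have q1 : ∀ x y, q x y ≤ 1 := by
    intro x y
    rw [hq]
    split_ifs <;> omega
  have qs : ∀ x y, q x y = q y x := by
    intro x y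
    rw [hq, hq, G.adj_comm]
  have q0 : ∀ x y, ¬ G.Adj x y → q x y = 0 := by
    intro x y h
    rw [hq, if_neg h]
  have q2 : ∀ x y x' y', ¬ (G.Adj x y ∧ G.Adj x' y') → q x y + q x' y' ≤ 1 := by
    intro x y x' y' h
    rw [hq, hq]
    split_ifs <;> first | omega | tauto
  have edges : 2 * G.edgeSet.ncard = ∑ x, ∑ y, q x y := by
    have h1 : G.edgeSet.ncard = G.edgeFinset.card := by
      rw [← SimpleGraph.coe_edgeFinset, Set.ncard_coe_finset]
    rw [h1, ← G.sum_degrees_eq_twice_card_edges]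
    apply Finset.sum_congr rfl
    intro x _
    simp only [hq]
    rw [← G.card_neighborFinset_eq_degree, SimpleGraph.neighborFinset_eq_filter, Finset.card_filter]
  have split : ∑ x, ∑ y, q x y = ∑ i, ∑ i', (∑ j, ∑ j', q (f i j) (f i' j'))
      + 2 * ∑ i, (∑ j, ∑ y ∈ D, q (f i j) y) + ∑ x ∈ D, ∑ y ∈ D, q x y := by
    have h1 : ∑ x ∈ D, ∑ i, ∑ j, q x (f i j) = ∑ i, (∑ j, ∑ y ∈ D, q (f i j) y) := by
      rw [Finset.sum_comm]
      apply Finset.sum_congr rfl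
      intro i _
      rw [Finset.sum_comm]
      apply Finset.sum_congr rfl
      intro j _
      apply Finset.sum_congr rfl
      intro x _
      exact qs _ _
    have h2 : ∀ i, ∑ j, ∑ i', ∑ j', q (f i j) (f i' j') = ∑ i', (∑ j, ∑ j', q (f i j) (f i' j')) :=
      fun i => Finset.sum_comm
    rw [sumV]
    simp only [sumV (fun y => q _ y), Finset.sum_add_distrib, h1, h2]
    ring
  have DD : ∑ x ∈ D, ∑ y ∈ D, q x y + 2 * F.card ^ 2 ≤ 2 * F.card * D.card := by
    have tf : ∀ e ∈ F, ∀ x ∈ Dset, q (p e) x + q (r e) x ≤ 1 := by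
      intro e he x hx
      apply q2
      rintro ⟨h1, h2⟩
      exact fact1 _ (hpD e he) _ (hrD e he) _ hx (hprA e he) h2 h1
    have UU : ∑ x ∈ U, ∑ y ∈ U, q x y = 0 := by
      apply Finset.sum_eq_zero
      intro x hx
      apply Finset.sum_eq_zero
      intro y hy
      exact q0 _ _ (fact2 x hx y hy)
    have FU : ∑ e ∈ F, ∑ u ∈ U, (q (p e) u + q (r e) u) ≤ F.card * U.card := by
      have : ∑ e ∈ F, ∑ u ∈ U, (q (p e) u + q (r e) u) ≤ ∑ e ∈ F, ∑ u ∈ U, 1 :=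
        Finset.sum_le_sum fun e he => Finset.sum_le_sum fun u hu => tf e he u ((hU u).1 hu).1
      simpa using this
    have FF : ∑ e ∈ F, ∑ e' ∈ F, (q (p e) (p e') + q (r e) (p e') + (q (p e) (r e') + q (r e) (r e')))
        ≤ F.card * (F.card * 2) := by
      have : ∑ e ∈ F, ∑ e' ∈ F, (q (p e) (p e') + q (r e) (p e') + (q (p e) (r e') + q (r e) (r e')))
        ≤ ∑ e ∈ F, ∑ e' ∈ F, 2 :=
        Finset.sum_le_sum fun e he => Finset.sum_le_sum fun e' he' => by
          have := tf e he _ (hpD e' he')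
          have := tf e he _ (hrD e' he')
          omega
      simpa using this
    have h3 : ∑ u ∈ U, ∑ e ∈ F, (q u (p e) + q u (r e)) = ∑ e ∈ F, ∑ u ∈ U, (q (p e) u + q (r e) u) := by
      rw [Finset.sum_comm]
      apply Finset.sum_congr rfl
      intro e _
      apply Finset.sum_congr rfl
      intro u _
      rw [qs u, qs u]
    have h4 : ∑ x ∈ D, ∑ y ∈ D, q x y =
        ∑ e ∈ F, ∑ e' ∈ F, (q (p e) (p e') + q (r e) (p e') + (q (p e) (r e') + q (r e) (r e')))
        + 2 * ∑ e ∈ F, ∑ u ∈ U, (q (p e) u + q (r e) u) + ∑ x ∈ U, ∑ y ∈ U, q x y := by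
      rw [sumD]
      simp only [sumD (fun y => q _ y)]
      simp only [Finset.sum_add_distrib] at h3 ⊢
      linarith
    rw [h4, UU, cardD]
    nlinarith
  have TDA : ∀ i ∈ A, ∑ j, ∑ y ∈ D, q (f i j) y ≤ 2 * D.card := by
    intro i hi
    obtain ⟨j, e1, he1, e2, he2, hee, hf1, hf2⟩ := (hA i).1 hi
    obtain ⟨j1, j2, hj1, hj2, hj12, hsum⟩ := fin3_split j
    rw [hsum]
    have h1 : ∑ y ∈ D, q (f i j) y ≤ D.card := by
      have := Finset.sum_le_sum (fun y (_ : y ∈ D) => q1 (f i j) y)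
      simpa using this
    have nofr : ∀ j' ≠ j, ∀ e ∈ F, ¬ Friendly G (f i j') e := by
      intro j' hj' e he hfe
      by_cases h : e = e1
      · exact fact3 i j' j hj' e he e2 he2 (by rw [h]; exact hee) hfe hf2
      · exact fact3 i j' j hj' e he e1 he1 h hfe hf1
    have h2 : ∑ y ∈ D, (q (f i j1) y + q (f i j2) y) ≤ D.card := by
      rw [sumD, cardD]
      have a1 : ∑ e ∈ F, (q (f i j1) (p e) + q (f i j2) (p e) + (q (f i j1) (r e) + q (f i j2) (r e)))
          ≤ ∑ e ∈ F, 2 := by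
        apply Finset.sum_le_sum
        intro e he
        have b1 := q2 (f i j1) (p e) (f i j1) (r e) (by rw [← hfr]; exact nofr j1 hj1 e he)
        have b2 := q2 (f i j2) (p e) (f i j2) (r e) (by rw [← hfr]; exact nofr j2 hj2 e he)
        omega
      have a2 : ∑ u ∈ U, (q (f i j1) u + q (f i j2) u) ≤ ∑ u ∈ U, 1 := by
        apply Finset.sum_le_sum
        intro u hu
        rw [hU] at hu
        apply q2
        rintro ⟨c1, c2⟩
        exact fact4 i j j1 j2 hj1 hj2 hj12 e1 he1 hf1 u hu.1 (hu.2 e1 he1) c1 c2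
      simp only [Finset.sum_const, smul_eq_mul, mul_one] at a1 a2
      linarith
    rw [Finset.sum_add_distrib] at h2
    omega
  have TDB : ∀ i, i ∉ A → ∑ j, ∑ y ∈ D, q (f i j) y + 3 * F.card ≤ 3 * D.card + 3 := by
    intro i hi
    have h1 : ∀ j, ∑ y ∈ D, q (f i j) y + F.card ≤ D.card + 1 := by
      intro j
      have hone : (F.filter (fun e => Friendly G (f i j) e)).card ≤ 1 := by
        rw [Finset.card_le_one]
        intro e1 h1 e2 h2
        rw [Finset.mem_filter] at h1 h2
        by_contra hne
        exact hi ((hA i).2 ⟨j, e1, h1.1, e2, h2.1, hne, h1.2, h2.2⟩)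
      rw [sumD, cardD]
      have a1 : ∑ e ∈ F, (q (f i j) (p e) + q (f i j) (r e)) ≤
          ∑ e ∈ F, (1 + if Friendly G (f i j) e then 1 else 0) := by
        apply Finset.sum_le_sum
        intro e he
        split_ifs with h
        · have := q1 (f i j) (p e)
          have := q1 (f i j) (r e)
          omega
        · rw [hfr] at h
          exact q2 _ _ _ _ h
      rw [Finset.sum_add_distrib (f := fun _ => 1), ← Finset.card_filter] at a1
      have a2 : ∑ u ∈ U, q (f i j) u ≤ ∑ u ∈ U, 1 := Finset.sum_le_sum (fun u _ => q1 _ _)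
      simp only [Finset.sum_const, smul_eq_mul, mul_one] at a1 a2
      omega
    have b0 := h1 0
    have b1 := h1 1
    have b2 := h1 2
    rw [Fin.sum_univ_three]
    omega
  have hAc : A.card + Aᶜ.card = t + 1 := by
    rw [Finset.card_add_card_compl]; simp
  have TD : ∑ i, (∑ j, ∑ y ∈ D, q (f i j) y) + Aᶜ.card * (3 * F.card) ≤
      A.card * (2 * D.card) + Aᶜ.card * (3 * D.card + 3) := by
    rw [← Finset.sum_add_sum_compl A]
    have a1 := Finset.sum_le_sum TDA
    have a2 := Finset.sum_le_sum (fun i (hi : i ∈ Aᶜ) => TDB i (Finset.mem_compl.1 hi))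
    rw [Finset.sum_add_distrib] at a2
    simp only [Finset.sum_const, smul_eq_mul] at a1 a2
    linarith
  have T9 : ∀ i i', ∑ j, ∑ j', q (f i j) (f i' j') ≤ 9 := by
    intro i i'
    have : ∑ j, ∑ j', q (f i j) (f i' j') ≤ ∑ j : Fin 3, ∑ j' : Fin 3, 1 :=
      Finset.sum_le_sum fun j _ => Finset.sum_le_sum fun j' _ => q1 _ _
    simpa using this
  have T6 : ∀ i, ∑ j, ∑ j', q (f i j) (f i j') ≤ 6 := by
    intro i
    have : ∑ j, ∑ j', q (f i j) (f i j') ≤ ∑ j : Fin 3, ∑ j' : Fin 3, if j = j' then 0 else 1 := by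
      refine Finset.sum_le_sum fun j _ => Finset.sum_le_sum fun j' _ => ?_
      split_ifs with h
      · subst h
        rw [q0 _ _ (G.loopless.irrefl _)]
      · exact q1 _ _
    refine this.trans ?_
    decide
  have T7 : ∀ i ∈ A, ∀ i' ∈ A, i ≠ i' → ∑ j, ∑ j', q (f i j) (f i' j') ≤ 7 := by
    intro i hi i' hi' hii
    obtain ⟨j, e1, he1, e2, he2, hee, hf1, hf2⟩ := (hA i).1 hi
    obtain ⟨j', e1', he1', e2', he2', hee', hf1', hf2'⟩ := (hA i').1 hi'
    obtain ⟨e, he, e', he', hne, hfe, hfe'⟩ : ∃ e ∈ F, ∃ e' ∈ F, e ≠ e' ∧ Friendly G (f i j) e ∧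
        Friendly G (f i' j') e' := by
      by_cases h : e1 = e1'
      · exact ⟨e1, he1, e2', he2', by rw [h]; exact hee', hf1, hf2'⟩
      · exact ⟨e1, he1, e1', he1', h, hf1, hf1'⟩
    obtain ⟨j1, j2, hj1, hj2, hj12, hsum⟩ := fin3_split j
    obtain ⟨j1', j2', hj1', hj2', hj12', hsum'⟩ := fin3_split j'
    rw [hsum, hsum', hsum', hsum']
    have key : ∀ k, k ≠ j' → q (f i j1) (f i' k) + q (f i j2) (f i' k) ≤ 1 := by
      intro k hk
      apply q2
      rintro ⟨c1, c2⟩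
      exact fact5 i i' j j1 j2 j' k hii hj1 hj2 hj12 hk e he e' he' hne hfe hfe' c1 c2
    have k1 := key _ hj1'
    have k2 := key _ hj2'
    have := q1 (f i j) (f i' j')
    have := q1 (f i j) (f i' j1')
    have := q1 (f i j) (f i' j2')
    have := q1 (f i j1) (f i' j')
    have := q1 (f i j2) (f i' j')
    omega
  have TT : ∑ i, ∑ i', (∑ j, ∑ j', q (f i j) (f i' j')) + 3 * (t + 1) + 2 * (A.card * A.card)
      ≤ 9 * ((t + 1) * (t + 1)) + 2 * A.card := by
    have h0 : ∑ i, ∑ i', ((∑ j, ∑ j', q (f i j) (f i' j')) + (if i = i' then 3 else 0)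
        + 2 * ((if i ∈ A then 1 else 0) * (if i' ∈ A then 1 else 0)))
        ≤ ∑ i : Fin (t + 1), ∑ i' : Fin (t + 1),
          (9 + (if i = i' then (if i ∈ A then 2 else 0) else 0)) := by
      refine Finset.sum_le_sum fun i _ => Finset.sum_le_sum fun i' _ => ?_
      have b9 := T9 i i'
      by_cases h : i = i'
      · subst h
        have b6 := T6 i
        by_cases hi : i ∈ A <;> simp [hi] <;> omega
      · by_cases hi : i ∈ A
        · by_cases hi' : i' ∈ A
          · have b7 := T7 i hi i' hi' h
            simp [hi, hi', h]; omega
          · simp [hi, hi', h]; omega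
        · simp [hi, h]; omega
    have h1 : ∑ i : Fin (t + 1), ∑ i' : Fin (t + 1),
        2 * ((if i ∈ A then 1 else 0) * (if i' ∈ A then 1 else 0)) = 2 * (A.card * A.card) := by
      simp only [← Finset.mul_sum]
      rw [← Finset.sum_mul]
      simp
    simp only [Finset.sum_add_distrib] at h0
    rw [h1] at h0
    simp only [Finset.sum_ite_eq, Finset.mem_univ, if_true, Finset.sum_const, Finset.card_univ,
      Fintype.card_fin, smul_eq_mul, Finset.sum_ite_mem, Finset.univ_inter] at h0
    linarith
  have hb : 2 ≤ Aᶜ.card := by omega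
  refine arith_fin t n D.card (t + 1) A.card Aᶜ.card F.card G.edgeSet.ncard hn rfl cardV hAc.symm hb
    (by omega) he ?_
  rw [split] at edges
  have hs : ((t : ℤ) + 1) = A.card + Aᶜ.card := by exact_mod_cast hAc.symm
  zify at edges TT TD DD
  push_cast
  rw [hs] at TT ⊢
  rw [edges]
  linarith
end
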